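/- arXiv:1506.06200 — 2 statements merged into one kernel-verified Lean document; each statement's English description precedes it below -/
import Mathlib

section
/- Let k be a convenient field and let χ be a nonzero element of K_0[V_k] with L·χ = 0. Then there exist varieties X and Y over k such that χ = [X] − [Y], [X × 𝔸¹] = [Y × 𝔸¹] in K_0[V_k], and X × 𝔸¹ and Y × 𝔸¹ are not piecewise isomorphic. -/
open AlgebraicGeometry CategoryTheory CategoryTheory.Limits

noncomputable section

universe u

/-- A variety over a field `k`: a reduced separated scheme of finite type over `Spec k`. -/
structure Variety (k : Type u) [Field k] : Type (u + 1) where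
  /-- the underlying scheme -/
  toScheme : Scheme.{u}
  /-- the structure morphism to `Spec k` -/
  str : toScheme ⟶ Spec (CommRingCat.of k)
  reduced : IsReduced toScheme
  separated : IsSeparated str
  locallyOfFiniteType : LocallyOfFiniteType str
  quasiCompact : QuasiCompact str

namespace Variety

variable {k : Type u} [Field k]

/-- The dimension of a variety, i.e. the Krull dimension of its underlying space. -/
def dim (V : Variety k) : WithBot ℕ∞ := topologicalKrullDim V.toScheme

/-- `W` together with (implicitly) its two projections is a product of `X` and `Y`
over `k`, i.e. `W ≅ X ×ₖ Y`. -/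
def IsProductOf (W X Y : Variety k) : Prop :=
  ∃ e : W.toScheme ≅ Limits.pullback X.str Y.str,
    e.hom ≫ Limits.pullback.fst X.str Y.str ≫ X.str = W.str

/-- `A` is the affine line `𝔸¹` over `k`. -/
def IsAffLine (A : Variety k) : Prop :=
  ∃ e : A.toScheme ≅ Spec (CommRingCat.of (Polynomial k)),
    e.hom ≫ Spec.map (CommRingCat.ofHom (algebraMap k (Polynomial k))) = A.str

/-- `A` is affine `r`-space `𝔸^r` over `k`. -/
def IsAffSpace (r : ℕ) (A : Variety k) : Prop :=
  ∃ e : A.toScheme ≅ Spec (CommRingCat.of (MvPolynomial (Fin r) k)),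
    e.hom ≫ Spec.map (CommRingCat.ofHom (algebraMap k (MvPolynomial (Fin r) k))) = A.str

/-- A variety is smooth if its structure morphism is smooth. -/
def IsSmoothVar (V : Variety k) : Prop := IsSmooth V.str

/-- Projective `N`-space over `k`, as the `Proj` of a polynomial ring. -/
def ProjSpace (k : Type u) [Field k] (N : ℕ) : Scheme.{u} :=
  letI := MvPolynomial.gradedAlgebra (σ := Fin (N + 1)) (R := k)
  Proj (MvPolynomial.homogeneousSubmodule (Fin (N + 1)) k)

/-- The structure morphism of projective `N`-space over `k`. -/
def ProjSpace.str (k : Type u) [Field k] (N : ℕ) :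
    ProjSpace k N ⟶ Spec (CommRingCat.of k) :=
  letI := MvPolynomial.gradedAlgebra (σ := Fin (N + 1)) (R := k)
  Proj.toSpecZero (MvPolynomial.homogeneousSubmodule (Fin (N + 1)) k) ≫
    Spec.map (CommRingCat.ofHom
      (algebraMap k (MvPolynomial.homogeneousSubmodule (Fin (N + 1)) k 0)))

/-- `P` is projective `N`-space over `k`, as a variety. -/
def IsProjSpaceVar (N : ℕ) (P : Variety k) : Prop :=
  ∃ e : P.toScheme ≅ ProjSpace k N, e.hom ≫ ProjSpace.str k N = P.str

/-- A variety is projective if it admits a closed immersion into some `ℙ^N` over `k`. -/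
def IsProjectiveVar (V : Variety k) : Prop :=
  ∃ (N : ℕ) (i : V.toScheme ⟶ ProjSpace k N),
    IsClosedImmersion i ∧ i ≫ ProjSpace.str k N = V.str

/-- `X` and `Y` are birationally isomorphic over `k`:
some dense open subvarieties are isomorphic over `k`. -/
def BirEquiv (X Y : Variety k) : Prop :=
  ∃ (U : X.toScheme.Opens) (V : Y.toScheme.Opens),
    Dense (U : Set X.toScheme) ∧ Dense (V : Set Y.toScheme) ∧
    ∃ e : U.toScheme ≅ V.toScheme, e.hom ≫ V.ι ≫ Y.str = U.ι ≫ X.str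

/-- `X` and `Y` are stably birational: `X × 𝔸^r` and `Y × 𝔸^r` are birationally
isomorphic for some `r ≥ 0`. -/
def StablyBirational (X Y : Variety k) : Prop :=
  ∃ (r : ℕ) (A XA YA : Variety k),
    IsAffSpace r A ∧ IsProductOf XA X A ∧ IsProductOf YA Y A ∧ BirEquiv XA YA

/-- `X` and `Y` are piecewise isomorphic: they admit finite partitions into locally
closed subvarieties which are isomorphic over `k` piece by piece. -/
def PiecewiseIso (X Y : Variety k) : Prop :=
  ∃ (m : ℕ) (P Q : Fin m → Variety k)
    (f : ∀ i, (P i).toScheme ⟶ X.toScheme) (g : ∀ i, (Q i).toScheme ⟶ Y.toScheme),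
    (∀ i, IsImmersion (f i)) ∧ (∀ i, IsImmersion (g i)) ∧
    (∀ i, f i ≫ X.str = (P i).str) ∧ (∀ i, g i ≫ Y.str = (Q i).str) ∧
    (∀ i j, i ≠ j → Disjoint (Set.range (f i).base) (Set.range (f j).base)) ∧
    (∀ i j, i ≠ j → Disjoint (Set.range (g i).base) (Set.range (g j).base)) ∧
    (⋃ i, Set.range (f i).base) = Set.univ ∧
    (⋃ i, Set.range (g i).base) = Set.univ ∧
    ∀ i, ∃ e : (P i).toScheme ≅ (Q i).toScheme, e.hom ≫ (Q i).str = (P i).str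

/-- The set of generators of the scissor-type relations among varieties of the class `P`:
`[X] = [X']` for `X ≅ X'` over `k`, and `[X] = [Y] + [U]` whenever `Y` is a closed
subvariety of `X` and `U` is its open complement. -/
def cutRel (P : Variety k → Prop) : Set (FreeAbelianGroup {V : Variety k // P V}) :=
  {a | (∃ X Y : {V : Variety k // P V},
          (∃ e : X.1.toScheme ≅ Y.1.toScheme, e.hom ≫ Y.1.str = X.1.str) ∧
          a = FreeAbelianGroup.of X - FreeAbelianGroup.of Y) ∨
       (∃ (X Y U : {V : Variety k // P V}) (i : Y.1.toScheme ⟶ X.1.toScheme)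
          (j : U.1.toScheme ⟶ X.1.toScheme),
          IsClosedImmersion i ∧ IsOpenImmersion j ∧
          i ≫ X.1.str = Y.1.str ∧ j ≫ X.1.str = U.1.str ∧
          Set.range j.base = (Set.range i.base)ᶜ ∧
          a = FreeAbelianGroup.of X - FreeAbelianGroup.of Y - FreeAbelianGroup.of U)}

/-- The Grothendieck group of the class of varieties satisfying `P`: the free abelian
group on (isomorphism classes of) varieties satisfying `P`, modulo the relations
`[X] = [Y] + [X ∖ Y]` for closed subvarieties `Y` of `X`. -/
def K0 (k : Type u) [Field k] (P : Variety k → Prop) : Type (u + 1) :=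
  FreeAbelianGroup {V : Variety k // P V} ⧸ AddSubgroup.closure (cutRel P)

instance (P : Variety k → Prop) : AddCommGroup (K0 k P) :=
  QuotientAddGroup.Quotient.addCommGroup _

/-- The class of a variety in the Grothendieck group. -/
def K0.cls {P : Variety k → Prop} (V : Variety k) (hV : P V) : K0 k P :=
  QuotientAddGroup.mk (FreeAbelianGroup.of ⟨V, hV⟩)

/-- `K_0(V_k^{(n)})`: the Grothendieck group of varieties of dimension at most `n`. -/
abbrev K0le (k : Type u) [Field k] (n : ℕ) : Type (u + 1) :=
  K0 k (fun V => V.dim ≤ (n : WithBot ℕ∞))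

/-- `K_0[V_k]` (as an abelian group): the Grothendieck group of all varieties over `k`. -/
abbrev K0Var (k : Type u) [Field k] : Type (u + 1) := K0 k (fun _ => True)

/-- The class of a variety in `K_0[V_k]`. -/
def K0Var.cls (V : Variety k) : K0Var k := K0.cls V trivial

/-- `K_0(V_k^{(n,n-1)})`: the Grothendieck group of varieties of dimension at most `n`,
where moreover the class of every variety of dimension `< n` is set to `0`. -/
def K0graded (k : Type u) [Field k] (n : ℕ) : Type (u + 1) :=
  FreeAbelianGroup {V : Variety k // V.dim ≤ (n : WithBot ℕ∞)} ⧸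
    AddSubgroup.closure (cutRel (fun V => V.dim ≤ (n : WithBot ℕ∞)) ∪
      {a | ∃ X : {V : Variety k // V.dim ≤ (n : WithBot ℕ∞)},
        X.1.dim < (n : WithBot ℕ∞) ∧ a = FreeAbelianGroup.of X})

instance (n : ℕ) : AddCommGroup (K0graded k n) :=
  QuotientAddGroup.Quotient.addCommGroup _

/-- The class of a variety in `K_0(V_k^{(n,n-1)})`. -/
def K0graded.cls (n : ℕ) (V : Variety k) (hV : V.dim ≤ (n : WithBot ℕ∞)) : K0graded k n :=
  QuotientAddGroup.mk (FreeAbelianGroup.of ⟨V, hV⟩)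

/-- `x ∈ K_0(V_k^{(b)})` lies in the image of multiplication by `L = [𝔸¹]`, viewed as the
map `K_0(V_k^{(a)}) → K_0(V_k^{(b)})` sending `[Z]` to `[Z × 𝔸¹]`. -/
def InMulLImage (a b : ℕ) (x : K0le k b) : Prop :=
  ∃ (m : ℕ) (c : Fin m → ℤ) (Z W : Fin m → Variety k)
    (_ : ∀ i, (Z i).dim ≤ (a : WithBot ℕ∞)) (hW : ∀ i, (W i).dim ≤ (b : WithBot ℕ∞)),
    (∀ i, ∃ A : Variety k, IsAffLine A ∧ IsProductOf (W i) (Z i) A) ∧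
    x = ∑ i, c i • K0.cls (W i) (hW i)

/-- `L · χ = 0` in `K_0[V_k]`: there is a representation `χ = ∑ cᵢ [Zᵢ]` with
`∑ cᵢ [Zᵢ × 𝔸¹] = 0`. -/
def MulLZero (χ : K0Var k) : Prop :=
  ∃ (m : ℕ) (c : Fin m → ℤ) (Z W : Fin m → Variety k),
    (∀ i, ∃ A : Variety k, IsAffLine A ∧ IsProductOf (W i) (Z i) A) ∧
    χ = ∑ i, c i • K0Var.cls (Z i) ∧
    (0 : K0Var k) = ∑ i, c i • K0Var.cls (W i)

/-- The subgroup of `K_0[V_k]` of multiples of `L`, i.e. the ideal generated by `L`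
viewed as an additive subgroup. -/
def LMultiples (k : Type u) [Field k] : AddSubgroup (K0Var k) :=
  AddSubgroup.closure
    {y | ∃ (m : ℕ) (c : Fin m → ℤ) (Z W : Fin m → Variety k),
      (∀ i, ∃ A : Variety k, IsAffLine A ∧ IsProductOf (W i) (Z i) A) ∧
      y = ∑ i, c i • K0Var.cls (W i)}

/-- `Z` realizes the closed complement `X ∖ U` of the open `U ⊆ X` as a variety. -/
def IsComplementOf (Z X : Variety k) (U : X.toScheme.Opens) : Prop :=
  ∃ i : Z.toScheme ⟶ X.toScheme, IsClosedImmersion i ∧ i ≫ X.str = Z.str ∧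
    Set.range i.base = (U : Set X.toScheme)ᶜ

/-- The birational isomorphism between `n`-dimensional varieties `X ⇢ Y` represented by
an isomorphism `U → V` of open subvarieties is convenient:
`[X ∖ U] - [Y ∖ V]` lies in the image of `·L : K_0(V_k^{(n-2)}) → K_0(V_k^{(n-1)})`. -/
def ConvenientRep (n : ℕ) (X Y : Variety k) (U : X.toScheme.Opens)
    (V : Y.toScheme.Opens) : Prop :=
  ∀ (ZX ZY : Variety k) (hZX : ZX.dim ≤ ((n - 1 : ℕ) : WithBot ℕ∞))
    (hZY : ZY.dim ≤ ((n - 1 : ℕ) : WithBot ℕ∞)),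
    IsComplementOf ZX X U → IsComplementOf ZY Y V →
    InMulLImage (n - 2) (n - 1) (K0.cls ZX hZX - K0.cls ZY hZY)

/-- A field `k` is convenient if every birational isomorphism between smooth projective
varieties over `k` is convenient. -/
def ConvenientField (k : Type u) [Field k] : Prop :=
  ∀ (n : ℕ) (X Y : Variety k), IsSmoothVar X → IsSmoothVar Y →
    IsProjectiveVar X → IsProjectiveVar Y →
    IrreducibleSpace X.toScheme → IrreducibleSpace Y.toScheme →
    X.dim = (n : WithBot ℕ∞) → Y.dim = (n : WithBot ℕ∞) →
    ∀ (U : X.toScheme.Opens) (V : Y.toScheme.Opens),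
      Dense (U : Set X.toScheme) → Dense (V : Set Y.toScheme) →
      ∀ e : U.toScheme ≅ V.toScheme, e.hom ≫ V.ι ≫ Y.str = U.ι ≫ X.str →
      ConvenientRep n X Y U V

end Variety
namespace Variety

variable {k : Type u} [Field k]

/-- The type of birational isomorphism classes of irreducible `n`-dimensional
varieties over `k` (the set `B_n`). -/
def BirClass (k : Type u) [Field k] (n : ℕ) : Type (u + 1) :=
  Quot (fun X Y : {V : Variety k // IrreducibleSpace V.toScheme ∧
    V.dim = (n : WithBot ℕ∞)} => BirEquiv X.1 Y.1)

/-- The type of stable birational isomorphism classes of irreducible varieties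
over `k` (the set `SB`). -/
def StableBirClass (k : Type u) [Field k] : Type (u + 1) :=
  Quot (fun X Y : {V : Variety k // IrreducibleSpace V.toScheme} =>
    StablyBirational X.1 Y.1)

/-- The family of varieties `C` together with the closed immersions `f i` realizes
exactly the `n`-dimensional irreducible components of `X`, each exactly once. -/
def RealizesComponents (n : ℕ) (X : Variety k) (m : ℕ)
    (C : Fin m → Variety k) (f : ∀ i, (C i).toScheme ⟶ X.toScheme) : Prop :=
  (∀ i, IsClosedImmersion (f i)) ∧ (∀ i, f i ≫ X.str = (C i).str) ∧
  Function.Injective (fun i => Set.range (f i).base) ∧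
  (Set.range fun i => Set.range (f i).base) =
    {S | S ∈ irreducibleComponents X.toScheme ∧
      topologicalKrullDim S = (n : WithBot ℕ∞)}

/-- `p : E ⟶ Z` is a Zariski-locally trivial `ℙ^ℓ`-bundle: every point of `Z` has an
open neighbourhood `W` such that `p⁻¹(W)` is isomorphic over `W` to `W × ℙ^ℓ`. -/
def IsProjBundle (ℓ : ℕ) {E Z : Variety k} (p : E.toScheme ⟶ Z.toScheme) : Prop :=
  ∀ z : Z.toScheme, ∃ W : Z.toScheme.Opens, z ∈ W ∧
    ∃ e : (p ⁻¹ᵁ W).toScheme ≅ Limits.pullback (W.ι ≫ Z.str) (ProjSpace.str k ℓ),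
      e.hom ≫ Limits.pullback.fst (W.ι ≫ Z.str) (ProjSpace.str k ℓ) = p ∣_ W

/-- `X` (of dimension `d`) has stable dimensional complexity `m`: `m` is the minimal
integer such that `X` is stably birational to `X' × 𝔸^(d-m)` for some variety `X'` of
dimension `m`. -/
def HasStableDimComplexity (X : Variety k) (d m : ℕ) : Prop :=
  (∃ X' A P : Variety k, X'.dim = (m : WithBot ℕ∞) ∧ IsAffSpace (d - m) A ∧
      IsProductOf P X' A ∧ StablyBirational X P) ∧
  ∀ j < m, ¬ ∃ X' A P : Variety k, X'.dim = (j : WithBot ℕ∞) ∧ IsAffSpace (d - j) A ∧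
      IsProductOf P X' A ∧ StablyBirational X P

/-- Generators of the covering relations among smooth varieties: `[X] = ∑ᵢ [Xᵢ]`
whenever `{Xᵢ → X}` is a finite family of locally closed embeddings of smooth
varieties with pairwise disjoint images whose union is all of `X`. -/
def smCutRel (k : Type u) [Field k] :
    Set (FreeAbelianGroup {V : Variety k // IsSmoothVar V}) :=
  {a | ∃ (X : {V : Variety k // IsSmoothVar V}) (m : ℕ)
        (P : Fin m → {V : Variety k // IsSmoothVar V})
        (f : ∀ i, (P i).1.toScheme ⟶ X.1.toScheme),
        (∀ i, IsImmersion (f i)) ∧ (∀ i, f i ≫ X.1.str = (P i).1.str) ∧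
        (∀ i j, i ≠ j → Disjoint (Set.range (f i).base) (Set.range (f j).base)) ∧
        (⋃ i, Set.range (f i).base) = Set.univ ∧
        a = FreeAbelianGroup.of X - ∑ i, FreeAbelianGroup.of (P i)}

/-- `K_0(V_k^{sm})`: the Grothendieck group of smooth varieties over `k`, with the
covering relations. -/
def K0sm (k : Type u) [Field k] : Type (u + 1) :=
  FreeAbelianGroup {V : Variety k // IsSmoothVar V} ⧸ AddSubgroup.closure (smCutRel k)

instance : AddCommGroup (K0sm k) := QuotientAddGroup.Quotient.addCommGroup _

/-- The class of a smooth variety in `K_0(V_k^{sm})`. -/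
def K0sm.cls (V : Variety k) (hV : IsSmoothVar V) : K0sm k :=
  QuotientAddGroup.mk (FreeAbelianGroup.of ⟨V, hV⟩)

end Variety
namespace Variety

variable {k : Type u} [Field k]

/-- The class of a variety in `K_0(V_k^{(n)})`. -/
def K0le.cls (n : ℕ) (V : Variety k) (hV : V.dim ≤ (n : WithBot ℕ∞)) : K0le k n :=
  K0.cls V hV

end Variety

open Variety

namespace KL

/-! ### Combinatorics: finite sets with two commuting permutations and an exotic lattice isomorphism -/

/-- A set with two (indexed by `Bool`) permutations. -/
class KAct (P : Type) where
  act : Bool → Equiv.Perm P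

open KAct

instance {P Q : Type} [KAct P] [KAct Q] : KAct (P ⊕ Q) :=
  ⟨fun s => Equiv.sumCongr (act s) (act s)⟩

instance {P Q : Type} [KAct P] [KAct Q] : KAct (P × Q) :=
  ⟨fun s => Equiv.prodCongr (act s) (act s)⟩

@[simp] lemma act_inl {P Q : Type} [KAct P] [KAct Q] (s : Bool) (x : P) :
    act s (Sum.inl x : P ⊕ Q) = Sum.inl (act s x) := rfl
@[simp] lemma act_inr {P Q : Type} [KAct P] [KAct Q] (s : Bool) (x : Q) :
    act s (Sum.inr x : P ⊕ Q) = Sum.inr (act s x) := rfl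
@[simp] lemma act_mk {P Q : Type} [KAct P] [KAct Q] (s : Bool) (x : P) (y : Q) :
    act s ((x, y) : P × Q) = (act s x, act s y) := rfl

/-- trivial set with `p` elements -/
def TrivS (p : ℕ) : Type := ZMod p
/-- the regular set -/
def RegS (p : ℕ) : Type := ZMod p × ZMod p
/-- the union of the quotients by lines -/
def TB (p : ℕ) : Type := Option (ZMod p) × ZMod p

instance (p : ℕ) [NeZero p] : Fintype (TrivS p) := inferInstanceAs (Fintype (ZMod p))
instance (p : ℕ) : DecidableEq (TrivS p) := inferInstanceAs (DecidableEq (ZMod p))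
instance (p : ℕ) [NeZero p] : Fintype (RegS p) := inferInstanceAs (Fintype (ZMod p × ZMod p))
instance (p : ℕ) : DecidableEq (RegS p) := inferInstanceAs (DecidableEq (ZMod p × ZMod p))
instance (p : ℕ) [NeZero p] : Fintype (TB p) :=
  inferInstanceAs (Fintype (Option (ZMod p) × ZMod p))
instance (p : ℕ) : DecidableEq (TB p) :=
  inferInstanceAs (DecidableEq (Option (ZMod p) × ZMod p))

instance (p : ℕ) : AddCommGroup (RegS p) := inferInstanceAs (AddCommGroup (ZMod p × ZMod p))

/-- the underlying residue class -/
def TrivS.z {p : ℕ} (x : TrivS p) : ZMod p := x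

abbrev TA (p : ℕ) : Type := TrivS p ⊕ RegS p

/-- the two basis vectors -/
def vec (p : ℕ) : Bool → RegS p
  | false => ((1, 0) : ZMod p × ZMod p)
  | true => ((0, 1) : ZMod p × ZMod p)

/-- the linear form attached to a line -/
def phi {p : ℕ} : Option (ZMod p) → RegS p → ZMod p
  | none, v => v.1
  | some s, v => v.2 - s * v.1

lemma phi_add {p : ℕ} (l : Option (ZMod p)) (v w : RegS p) :
    phi l (v + w) = phi l v + phi l w := by
  cases l with
  | none => rfl
  | some s =>
    show (v.2 + w.2) - s * (v.1 + w.1) = (v.2 - s * v.1) + (w.2 - s * w.1)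
    ring

instance (p : ℕ) : KAct (TrivS p) := ⟨fun _ => 1⟩
instance (p : ℕ) : KAct (RegS p) := ⟨fun s => Equiv.addRight (vec p s)⟩
instance (p : ℕ) : KAct (TB p) :=
  ⟨fun s => Equiv.prodShear (Equiv.refl _) (fun l => Equiv.addRight (phi l (vec p s)))⟩

lemma act_triv (p : ℕ) (s : Bool) (x : TrivS p) : act s x = x := rfl
lemma act_reg (p : ℕ) (s : Bool) (x : RegS p) :
    act s x = x + vec p s := rfl
lemma act_TB (p : ℕ) (s : Bool) (l : Option (ZMod p)) (c : ZMod p) :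
    act s (show TB p from (l, c)) = (show TB p from (l, c + phi l (vec p s))) := rfl

/-- The lattice map `ℤ[TA] → ℤ[TB]`. -/
def FF (p : ℕ) : Matrix (TB p) (TA p) ℤ := fun b a =>
  match b, a with
  | (l, c), Sum.inr v => if phi l v = c then 1 else 0
  | (l, _), Sum.inl s => if l = some s.z then 1 else 0

/-- The lattice map `ℤ[TB] → ℤ[TA]`. -/
def FG (p : ℕ) : Matrix (TA p) (TB p) ℤ := fun a b =>
  match b, a with
  | (l, c), Sum.inr v => (p : ℤ) * (if phi l v = c then 1 else 0) - (if l = none then 0 else 1)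
  | (l, _), Sum.inl s => (p : ℤ) * (if l = some s.z then 1 else 0) -
      (p : ℤ) * (if l = none then 1 else 0)

/-- `M` is equivariant. -/
def Equi {P Q : Type} [KAct P] [KAct Q] (M : Matrix P Q ℤ) : Prop :=
  ∀ (s : Bool) (x : P) (y : Q), M (act s x) (act s y) = M x y

lemma equi_FF (p : ℕ) : Equi (FF p) := by
  rintro s ⟨l, c⟩ (t | v)
  · rfl
  · show (if phi l (v + vec p s) = c + phi l (vec p s) then (1:ℤ) else 0) =
      if phi l v = c then 1 else 0
    rw [phi_add]; simp

lemma equi_FG (p : ℕ) : Equi (FG p) := by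
  rintro s (t | v) ⟨l, c⟩
  · rfl
  · show (p : ℤ) * (if phi l (v + vec p s) = c + phi l (vec p s)
        then (1:ℤ) else 0) - (if l = none then 0 else 1) =
      (p : ℤ) * (if phi l v = c then 1 else 0) - (if l = none then 0 else 1)
    rw [phi_add]; simp

lemma card_phi (p : ℕ) [Fact p.Prime] (v w : RegS p) :
    (∑ l : Option (ZMod p), (if phi l v = phi l w then (1 : ℤ) else 0)) =
      if v = w then (p : ℤ) + 1 else 1 := by
  split_ifs with h
  · subst h; simp [ZMod.card]
  · rw [Fintype.sum_option]
    obtain ⟨v1, v2⟩ := v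
    obtain ⟨w1, w2⟩ := w
    simp only [phi]
    by_cases h1 : v1 = w1
    · subst h1
      have h2 : v2 ≠ w2 := fun h2 => h (by rw [h2])
      simp [h2]
    · have h3 : v1 - w1 ≠ 0 := sub_ne_zero.mpr h1
      have : ∀ s : ZMod p, (v2 - s * v1 = w2 - s * w1) ↔ s = (v2 - w2) / (v1 - w1) := by
        intro s
        rw [eq_div_iff h3]
        constructor
        · intro h; linear_combination -h
        · intro h; linear_combination -h
      simp [this, h1]

lemma FG_mul_FF (p : ℕ) [Fact p.Prime] :
    FG p * FF p = ((p : ℤ) ^ 2) • (1 : Matrix (TA p) (TA p) ℤ) := by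
  have hp : ((Fintype.card (ZMod p) : ℕ) : ℤ) = p := by rw [ZMod.card]
  ext a b
  rw [Matrix.mul_apply]
  have key : ∀ f : TB p → ℤ, ∑ x, f x = ∑ l : Option (ZMod p), ∑ c : ZMod p, f (l, c) :=
    fun f => Fintype.sum_prod_type (f := f)
  rw [key]
  have hsm : ∀ s t : TrivS p, (s.z = t.z) ↔ s = t := fun s t => Iff.rfl
  rcases a with (s | v) <;> rcases b with (t | w)
  · simp only [FG, FF, Fintype.sum_option]
    have h0 : ∀ x : ZMod p, (some x = some t.z) ↔ x = t.z := fun x => by simp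
    simp only [Finset.sum_const, Finset.card_univ, ZMod.card, h0, nsmul_eq_mul, Matrix.smul_apply,
      Matrix.one_apply, smul_eq_mul, Sum.inl.injEq]
    by_cases h : s = t
    · subst h
      simp; ring
    · have h' : ¬ (t.z = s.z) := fun hh => h ((hsm _ _).1 hh).symm
      simp [h, h']
  · simp only [FG, FF]
    rw [Fintype.sum_option]
    simp
  · simp only [FG, FF]
    rw [Fintype.sum_option]
    simp [ZMod.card]
  · simp only [FG, FF]
    have h1 : ∀ l : Option (ZMod p), ∑ c : ZMod p,
        ((p : ℤ) * (if phi l v = c then 1 else 0) - (if l = none then 0 else 1)) *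
          (if phi l w = c then 1 else 0) =
        (p : ℤ) * (if phi l v = phi l w then 1 else 0) - (if l = none then 0 else 1) := by
      intro l
      simp
    rw [Finset.sum_congr rfl (fun l _ => h1 l), Finset.sum_sub_distrib, ← Finset.mul_sum, card_phi]
    rw [Fintype.sum_option]
    simp only [Matrix.smul_apply, Matrix.one_apply, smul_eq_mul, Sum.inr.injEq]
    simp only [reduceCtorEq, if_false, if_true, Finset.sum_const, Finset.card_univ, ZMod.card]
    by_cases h : v = w
    · simp [h]; ring
    · simp [h]

lemma card_TA (p : ℕ) [Fact p.Prime] : Fintype.card (TA p) = Fintype.card (TB p) := by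
  have h1 : Fintype.card (TrivS p) = p := ZMod.card p
  have h2 : Fintype.card (RegS p) = p * p := by
    rw [show Fintype.card (RegS p) = Fintype.card (ZMod p × ZMod p) from rfl, Fintype.card_prod,
      ZMod.card]
  have h3 : Fintype.card (TB p) = (p + 1) * p := by
    rw [show Fintype.card (TB p) = Fintype.card (Option (ZMod p) × ZMod p) from rfl,
      Fintype.card_prod, Fintype.card_option, ZMod.card]
  rw [Fintype.card_sum, h1, h2, h3]; ring

lemma FF_mul_FG (p : ℕ) [Fact p.Prime] :
    FF p * FG p = ((p : ℤ) ^ 2) • (1 : Matrix (TB p) (TB p) ℤ) := by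
  have hp : (p : ℚ) ≠ 0 := by exact_mod_cast (Fact.out : p.Prime).ne_zero
  let i : ℤ →+* ℚ := Int.castRingHom ℚ
  have h : (((p : ℚ) ^ 2)⁻¹ • (FG p).map i) * (FF p).map i = 1 := by
    rw [Matrix.smul_mul, ← Matrix.map_mul, FG_mul_FF]
    ext a b
    simp only [Matrix.smul_apply, Matrix.map_apply, Matrix.one_apply, i, smul_eq_mul]
    split_ifs <;> simp [hp]
  rw [Matrix.mul_eq_one_comm_of_card_eq _ _ _ (card_TA p)] at h
  apply Matrix.map_injective (f := i) Int.cast_injective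
  show (FF p * FG p).map i = (((p : ℤ) ^ 2) • (1 : Matrix (TB p) (TB p) ℤ)).map i
  rw [Matrix.map_mul]
  rw [Matrix.mul_smul] at h
  have h2 := congrArg (fun M => ((p : ℚ) ^ 2) • M) h
  simp only [smul_smul] at h2
  rw [mul_inv_cancel₀ (pow_ne_zero 2 hp), one_smul] at h2
  rw [h2]
  ext a b
  simp only [Matrix.smul_apply, Matrix.map_apply, Matrix.one_apply, i, smul_eq_mul]
  split_ifs <;> simp

/-- the first set -/
abbrev PP1 (p q : ℕ) : Type := (TA p × TA q) ⊕ (TB p × TB q)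
/-- the second set -/
abbrev PP2 (p q : ℕ) : Type := (TB p × TA q) ⊕ (TA p × TB q)

open Kronecker in
/-- the exotic isomorphism -/
def MM (p q : ℕ) (a b : ℤ) : Matrix (PP2 p q) (PP1 p q) ℤ :=
  Matrix.fromBlocks (a • (FF p ⊗ₖ (1 : Matrix (TA q) (TA q) ℤ)))
    (b • ((1 : Matrix (TB p) (TB p) ℤ) ⊗ₖ FG q))
    ((1 : Matrix (TA p) (TA p) ℤ) ⊗ₖ FF q) (FG p ⊗ₖ (1 : Matrix (TB q) (TB q) ℤ))

open Kronecker in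
/-- the inverse of the exotic isomorphism -/
def MN (p q : ℕ) (a b : ℤ) : Matrix (PP1 p q) (PP2 p q) ℤ :=
  Matrix.fromBlocks (FG p ⊗ₖ (1 : Matrix (TA q) (TA q) ℤ))
    ((-b) • ((1 : Matrix (TA p) (TA p) ℤ) ⊗ₖ FG q))
    (-((1 : Matrix (TB p) (TB p) ℤ) ⊗ₖ FF q)) (a • (FF p ⊗ₖ (1 : Matrix (TB q) (TB q) ℤ)))

lemma MM_mul_MN (p q : ℕ) [Fact p.Prime] [Fact q.Prime] (a b : ℤ)
    (h : a * p ^ 2 - b * q ^ 2 = 1) : MM p q a b * MN p q a b = 1 := by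
  rw [MM, MN]
  refine (Matrix.fromBlocks_multiply _ _ _ _ _ _ _ _).trans (Eq.trans ?_ Matrix.fromBlocks_one)
  congr 1
  · simp only [Matrix.smul_mul, Matrix.mul_neg, ← Matrix.mul_kronecker_mul, FF_mul_FG, FG_mul_FF,
      Matrix.one_mul, Matrix.mul_one, Matrix.kronecker_smul, Matrix.smul_kronecker,
      Matrix.one_kronecker_one, smul_smul]
    rw [← sub_eq_add_neg, ← sub_smul, h, one_smul]
  · simp only [Matrix.smul_mul, Matrix.mul_smul, ← Matrix.mul_kronecker_mul,
      Matrix.one_mul, Matrix.mul_one, smul_smul]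
    rw [← add_smul]; ring_nf; simp
  · simp only [Matrix.mul_neg, ← Matrix.mul_kronecker_mul,
      Matrix.one_mul, Matrix.mul_one]
    simp
  · simp only [Matrix.smul_mul, Matrix.mul_smul, ← Matrix.mul_kronecker_mul, FF_mul_FG, FG_mul_FF,
      Matrix.one_mul, Matrix.mul_one, Matrix.kronecker_smul, Matrix.smul_kronecker,
      Matrix.one_kronecker_one, smul_smul]
    rw [← add_smul]
    rw [show -b * (q:ℤ) ^ 2 + a * (p:ℤ) ^ 2 = 1 by linarith, one_smul]

lemma MN_mul_MM (p q : ℕ) [Fact p.Prime] [Fact q.Prime] (a b : ℤ)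
    (h : a * p ^ 2 - b * q ^ 2 = 1) : MN p q a b * MM p q a b = 1 := by
  rw [Matrix.mul_eq_one_comm_of_card_eq]
  · exact MM_mul_MN p q a b h
  · simp only [Fintype.card_sum (α := TB p × TA q), Fintype.card_sum (α := TA p × TA q),
      Fintype.card_prod, card_TA]

lemma Equi.kron {P Q P' Q' : Type} [KAct P] [KAct Q] [KAct P'] [KAct Q']
    {M : Matrix P Q ℤ} {N : Matrix P' Q' ℤ} (hM : Equi M) (hN : Equi N) :
    Equi (Matrix.kronecker M N) := by
  rintro s ⟨x, x'⟩ ⟨y, y'⟩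
  simp only [act_mk, Matrix.kronecker, Matrix.kroneckerMap_apply, hM s, hN s]

lemma Equi.one {P : Type} [KAct P] [DecidableEq P] : Equi (1 : Matrix P P ℤ) := by
  intro s x y
  simp [Matrix.one_apply]

lemma Equi.smul {P Q : Type} [KAct P] [KAct Q] {M : Matrix P Q ℤ} (hM : Equi M) (a : ℤ) :
    Equi (a • M) := by
  intro s x y
  simp [hM s]

lemma Equi.neg {P Q : Type} [KAct P] [KAct Q] {M : Matrix P Q ℤ} (hM : Equi M) :
    Equi (-M) := by
  intro s x y
  simp [hM s]

lemma Equi.blocks {P Q P' Q' : Type} [KAct P] [KAct Q] [KAct P'] [KAct Q']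
    {A : Matrix P Q ℤ} {B : Matrix P Q' ℤ} {C : Matrix P' Q ℤ} {D : Matrix P' Q' ℤ}
    (hA : Equi A) (hB : Equi B) (hC : Equi C) (hD : Equi D) :
    Equi (Matrix.fromBlocks A B C D) := by
  rintro s (x | x) (y | y) <;> simp [hA s, hB s, hC s, hD s]

lemma equi_MM (p q : ℕ) (a b : ℤ) : Equi (MM p q a b) :=
  Equi.blocks (((equi_FF p).kron Equi.one).smul a) ((Equi.one.kron (equi_FG q)).smul b)
    (Equi.one.kron (equi_FF q)) ((equi_FG p).kron Equi.one)

lemma equi_MN (p q : ℕ) (a b : ℤ) : Equi (MN p q a b) :=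
  Equi.blocks ((equi_FG p).kron Equi.one) ((Equi.one.kron (equi_FG q)).smul (-b))
    (Equi.one.kron (equi_FF q)).neg (((equi_FF p).kron Equi.one).smul a)

end KL

namespace KL
open KAct
open scoped TensorProduct

lemma prod_zpow_sum {G ι : Type*} [CommGroup G] (s : Finset ι) (f : ι → ℤ) (a : G) :
    ∏ i ∈ s, a ^ f i = a ^ ∑ i ∈ s, f i := by
  classical
  induction s using Finset.induction_on with
  | empty => simp
  | insert i s hi ih => rw [Finset.prod_insert hi, Finset.sum_insert hi, ih, zpow_add]

/-- Eigenbasis data for two endomorphisms of an `R`-algebra `E`. -/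
structure KumData (R E : Type u) [CommRing R] [CommRing E] [Algebra R E] where
  sig : Bool → (E →ₐ[R] E)
  idx : Type
  fin : Finite idx
  bas : Module.Basis idx R E
  i0 : idx
  bas_i0 : bas i0 = 1
  c : Bool → idx → R
  eig : ∀ s i, sig s (bas i) = c s i • bas i
  hunit : ∀ i, i ≠ i0 → ∃ s, IsUnit (c s i - 1)

section
variable {R E : Type u} [CommRing R] [CommRing E] [Algebra R E] (K : KumData R E)
variable {S T : Type u} [CommRing S] [CommRing T] [Algebra R S] [Algebra R T]

/-- the extended endomorphisms -/
def KumData.tau (S : Type u) [CommRing S] [Algebra R S] (s : Bool) :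
    (S ⊗[R] E) →ₐ[S] (S ⊗[R] E) :=
  Algebra.TensorProduct.map (AlgHom.id S S) (K.sig s)

@[simp] lemma KumData.tau_tmul (s : Bool) (a : S) (e : E) :
    K.tau S s (a ⊗ₜ e) = a ⊗ₜ (K.sig s e) := rfl

/-- functoriality -/
def fmap (f : S →ₐ[R] T) : (S ⊗[R] E) →ₐ[R] (T ⊗[R] E) :=
  Algebra.TensorProduct.map f (AlgHom.id R E)

@[simp] lemma fmap_tmul (f : S →ₐ[R] T) (a : S) (e : E) :
    fmap (E := E) f (a ⊗ₜ e) = f a ⊗ₜ e := rfl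

lemma KumData.inj {a b : S} (K : KumData R E) (h : (a ⊗ₜ[R] (1 : E)) = b ⊗ₜ[R] (1 : E)) : a = b := by
  classical
  let B := Algebra.TensorProduct.basis S K.bas
  have h1 : ∀ x : S, B.repr (x ⊗ₜ[R] (1 : E)) K.i0 = x := by
    intro x
    rw [← K.bas_i0]
    simp [B]
  rw [← h1 a, ← h1 b, h]

lemma KumData.descent (z : S ⊗[R] E) (hz : ∀ s, K.tau S s z = z) :
    ∃ a : S, z = a ⊗ₜ 1 := by
  classical
  have := K.fin
  have := Fintype.ofFinite K.idx
  let B := Algebra.TensorProduct.basis S K.bas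
  have hB : ∀ i, B i = 1 ⊗ₜ K.bas i := fun i => by simp [B]
  have htau : ∀ s i, K.tau S s (B i) = algebraMap R S (K.c s i) • B i := by
    intro s i
    rw [hB, tau_tmul, K.eig, TensorProduct.tmul_smul, algebraMap_smul]
  have hco : ∀ s i, B.repr z i * (algebraMap R S (K.c s i)) = B.repr z i := by
    intro s i
    have h1 : K.tau S s z = ∑ j, (B.repr z j * algebraMap R S (K.c s j)) • B j := by
      conv_lhs => rw [← B.sum_repr z]
      rw [map_sum]
      refine Finset.sum_congr rfl fun j _ => ?_
      rw [map_smul, htau, smul_smul]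
    have h2 := congrArg (fun w => B.repr w i) h1
    simp only [hz s] at h2
    rw [B.repr_sum_self] at h2
    exact h2.symm
  have h0 : ∀ i, i ≠ K.i0 → B.repr z i = 0 := by
    intro i hi
    obtain ⟨s, hs⟩ := K.hunit i hi
    have h3 : B.repr z i * algebraMap R S (K.c s i - 1) = 0 := by
      rw [map_sub, map_one, mul_sub, hco, mul_one, sub_self]
    exact (hs.map (algebraMap R S)).mul_left_eq_zero.mp h3
  refine ⟨B.repr z K.i0, ?_⟩
  conv_lhs => rw [← B.sum_repr z]
  rw [Finset.sum_eq_single K.i0]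
  · rw [hB, K.bas_i0, TensorProduct.smul_tmul', smul_eq_mul, mul_one]
  · intro i _ hi
    rw [h0 i hi, zero_smul]
  · simp

/-- A set with permutations, together with a matrix splitting the corresponding descent datum. -/
structure Good (K : KumData R E) (P : Type) [KAct P] [Fintype P] [DecidableEq P] where
  C : Matrix P P E
  D : Matrix P P E
  CD : C * D = 1
  DC : D * C = 1
  hC : ∀ s p j, K.sig s (C p j) = C (act s p) j
  hD : ∀ s j p, K.sig s (D j p) = D j (act s p)

variable {K}
variable {P : Type} [KAct P] [Fintype P] [DecidableEq P] (g : Good K P)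

/-- the coordinates -/
def Good.uu (y : P → S) (p : P) : S ⊗[R] E := ∑ j, y j ⊗ₜ g.C p j

lemma Good.tau_uu (y : P → S) (s : Bool) (p : P) :
    K.tau S s (g.uu y p) = g.uu y (act s p) := by
  simp [Good.uu, g.hC]

lemma Good.fmap_uu (f : S →ₐ[R] T) (y : P → S) (p : P) :
    fmap f (g.uu y p) = g.uu (fun j => f (y j)) p := by
  simp [Good.uu]

lemma Good.D_uu (y : P → S) (j : P) :
    y j ⊗ₜ[R] (1 : E) = ∑ p, (1 ⊗ₜ g.D j p) * g.uu y p := by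
  have h1 : ∀ i, ∑ p, g.D j p * g.C p i = if j = i then 1 else 0 := by
    intro i
    have := congrFun (congrFun g.DC j) i
    rwa [Matrix.mul_apply, Matrix.one_apply] at this
  simp only [Good.uu, Finset.mul_sum, Algebra.TensorProduct.tmul_mul_tmul, one_mul]
  rw [Finset.sum_comm]
  simp only [← TensorProduct.tmul_sum, h1]
  rw [Finset.sum_eq_single j]
  · simp
  · intro b _ hb
    simp [hb.symm]
  · simp

lemma Good.uu_inj {y y' : P → S} (h : ∀ p, g.uu y p = g.uu y' p) : y = y' := by
  funext j
  apply K.inj (E := E)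
  rw [g.D_uu, g.D_uu]
  simp only [h]

lemma Good.uu_surj (u : P → S ⊗[R] E) (hu : ∀ s p, K.tau S s (u p) = u (act s p)) :
    ∃ y : P → S, ∀ p, g.uu y p = u p := by
  have h1 : ∀ j, ∃ a : S, ∑ p, (1 ⊗ₜ g.D j p) * u p = a ⊗ₜ[R] (1 : E) := by
    intro j
    apply K.descent
    intro s
    simp only [map_sum, map_mul, KumData.tau_tmul, g.hD, hu]
    exact Equiv.sum_comp (act s) (fun p => (1 ⊗ₜ g.D j p) * u p)
  choose y hy using h1
  refine ⟨y, fun p => ?_⟩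
  have h2 : ∀ j, y j ⊗ₜ[R] g.C p j = ∑ q, (1 ⊗ₜ (g.C p j * g.D j q)) * u q := by
    intro j
    have : y j ⊗ₜ[R] g.C p j = (1 ⊗ₜ g.C p j) * (y j ⊗ₜ[R] (1 : E)) := by simp
    rw [this, ← hy, Finset.mul_sum]
    refine Finset.sum_congr rfl fun q _ => ?_
    rw [← mul_assoc]; simp
  have h3 : ∀ q, ∑ j, g.C p j * g.D j q = if p = q then 1 else 0 := by
    intro i
    have := congrFun (congrFun g.CD p) i
    rwa [Matrix.mul_apply, Matrix.one_apply] at this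
  simp only [Good.uu, h2]
  rw [Finset.sum_comm]
  simp only [← Finset.sum_mul, ← TensorProduct.tmul_sum, h3]
  rw [Finset.sum_eq_single p]
  · rw [if_pos rfl, ← Algebra.TensorProduct.one_def, one_mul]
  · intro b _ hb
    simp [hb.symm]
  · simp

lemma Good.exists_norm (y : P → S) : ∃ a : S, ∏ p, g.uu y p = a ⊗ₜ[R] (1 : E) := by
  apply K.descent
  intro s
  simp only [map_prod, g.tau_uu]
  exact Equiv.prod_comp (act s) (fun p => g.uu y p)

/-- the norm form -/
def Good.nm : MvPolynomial P R := (g.exists_norm (S := MvPolynomial P R) MvPolynomial.X).choose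

lemma Good.nm_spec : ∏ p, g.uu (S := MvPolynomial P R) MvPolynomial.X p = g.nm ⊗ₜ[R] (1 : E) :=
  (g.exists_norm (S := MvPolynomial P R) MvPolynomial.X).choose_spec

lemma Good.nm_eval (f : MvPolynomial P R →ₐ[R] S) :
    ∏ p, g.uu (fun j => f (MvPolynomial.X j)) p = (f g.nm) ⊗ₜ[R] (1 : E) := by
  have := congrArg (fmap f) g.nm_spec
  rw [map_prod] at this
  simpa only [g.fmap_uu, fmap_tmul] using this

lemma KumData.isUnit_of (K : KumData R E) {a : S} (h : IsUnit (a ⊗ₜ[R] (1 : E))) : IsUnit a := by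
  obtain ⟨w, hw⟩ := h.exists_right_inv
  obtain ⟨b, hb⟩ := K.descent w (by
    intro s
    have h1 := congrArg (K.tau S s) hw
    rw [map_mul, tau_tmul, map_one, map_one] at h1
    calc K.tau S s w = (a ⊗ₜ[R] (1 : E) * w) * K.tau S s w := by rw [hw, one_mul]
      _ = w * (a ⊗ₜ[R] (1 : E) * K.tau S s w) := by ring
      _ = w := by rw [h1, mul_one])
  subst hb
  rw [Algebra.TensorProduct.tmul_mul_tmul, mul_one, Algebra.TensorProduct.one_def] at hw
  exact IsUnit.of_mul_eq_one b (K.inj hw)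

variable {Q : Type} [KAct Q] [Fintype Q] [DecidableEq Q] (h : Good K Q)

/-- the correspondence between points given by an integer matrix -/
def Corr (N : Matrix P Q ℤ) (y : P → S) (z : Q → S) : Prop :=
  ∃ (U : P → (S ⊗[R] E)ˣ) (V : Q → (S ⊗[R] E)ˣ), (∀ p, (U p : S ⊗[R] E) = g.uu y p) ∧
    (∀ q, (V q : S ⊗[R] E) = h.uu z q) ∧ ∀ p, U p = ∏ q, V q ^ N p q

lemma Corr.map {N : Matrix P Q ℤ} {y : P → S} {z : Q → S} (H : Corr g h N y z) (f : S →ₐ[R] T) :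
    Corr g h N (fun j => f (y j)) (fun j => f (z j)) := by
  obtain ⟨U, V, hU, hV, hUV⟩ := H
  refine ⟨fun p => Units.map ((fmap (E := E) f).toRingHom : (S ⊗[R] E) →* (T ⊗[R] E)) (U p),
    fun q => Units.map ((fmap (E := E) f).toRingHom : (S ⊗[R] E) →* (T ⊗[R] E)) (V q), fun p => ?_, fun p => ?_,
    fun p => ?_⟩
  · simp [hU, g.fmap_uu]
  · simp [hV, h.fmap_uu]
  · simp only [hUV, map_prod, map_zpow]

lemma Corr.symm {N : Matrix P Q ℤ} {M : Matrix Q P ℤ} (hMN : M * N = 1) {y : P → S} {z : Q → S}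
    (H : Corr g h N y z) : Corr h g M z y := by
  obtain ⟨U, V, hU, hV, hUV⟩ := H
  refine ⟨V, U, hV, hU, fun q => ?_⟩
  simp only [hUV, ← Finset.prod_zpow, ← zpow_mul]
  rw [Finset.prod_comm]
  have h1 : ∀ r, ∏ p, V r ^ (N p r * M q p) = V r ^ ((1 : Matrix Q Q ℤ) q r) := by
    intro r
    rw [← hMN, Matrix.mul_apply, ← prod_zpow_sum]
    exact Finset.prod_congr rfl fun p _ => by rw [mul_comm]
  simp only [h1, Matrix.one_apply]
  rw [Finset.prod_eq_single q]
  · simp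
  · intro b _ hb
    simp [hb.symm]
  · simp

lemma Corr.unique {N : Matrix P Q ℤ} {y y' : P → S} {z : Q → S} (H : Corr g h N y z)
    (H' : Corr g h N y' z) : y = y' := by
  obtain ⟨U, V, hU, hV, hUV⟩ := H
  obtain ⟨U', V', hU', hV', hUV'⟩ := H'
  have : V = V' := by
    funext q; ext; rw [hV, hV']
  subst this
  apply g.uu_inj
  intro p
  rw [← hU, ← hU', hUV, hUV']

lemma Corr.exists {N : Matrix P Q ℤ} (hN : Equi N) (z : Q → S) (hz : ∀ q, IsUnit (h.uu z q)) :
    ∃ y : P → S, Corr g h N y z := by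
  choose V hV using hz
  let U : P → (S ⊗[R] E)ˣ := fun p => ∏ q, V q ^ N p q
  have hVs : ∀ s q, Units.map (K.tau S s : (S ⊗[R] E) →* (S ⊗[R] E)) (V q) = V (act s q) := by
    intro s q
    ext
    simp [hV, h.tau_uu]
  obtain ⟨y, hy⟩ := g.uu_surj (fun p => (U p : S ⊗[R] E)) (by
    intro s p
    have h1 : Units.map (K.tau S s : (S ⊗[R] E) →* (S ⊗[R] E)) (U p) = U (act s p) := by
      simp only [U, map_prod, map_zpow, hVs]
      rw [← Equiv.prod_comp (act s) (fun q => V q ^ N (act s p) q)]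
      simp only [hN s]
    exact congrArg Units.val h1)
  exact ⟨y, U, V, fun p => (hy p).symm, hV, fun p => rfl⟩

end

section iso
variable {R E : Type u} [CommRing R] [CommRing E] [Algebra R E] {K : KumData R E}
variable {P : Type} [KAct P] [Fintype P] [DecidableEq P] (g : Good K P)
variable {Q : Type} [KAct Q] [Fintype Q] [DecidableEq Q] (h : Good K Q)

/-- the localization -/
abbrev Good.Loc : Type u := Localization.Away g.nm

/-- the universal point -/
def Good.taut (j : P) : g.Loc := algebraMap (MvPolynomial P R) g.Loc (MvPolynomial.X j)

lemma Good.taut_unit (p : P) : IsUnit (g.uu g.taut p) := by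
  have h1 := g.nm_eval (IsScalarTower.toAlgHom R (MvPolynomial P R) g.Loc)
  have h2 : IsUnit (IsScalarTower.toAlgHom R (MvPolynomial P R) g.Loc g.nm) :=
    IsLocalization.Away.algebraMap_isUnit g.nm
  have h3 : IsUnit (∏ p, g.uu g.taut p) := by
    have h4 := h2.map (Algebra.TensorProduct.includeLeft : g.Loc →ₐ[R] g.Loc ⊗[R] E)
    exact h1 ▸ h4
  exact (IsUnit.prod_univ_iff.mp h3) p

lemma Good.hom_ext {S : Type u} [CommRing S] [Algebra R S] {f f' : g.Loc →ₐ[R] S}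
    (H : ∀ j, f (g.taut j) = f' (g.taut j)) : f = f' := by
  have : (f.comp (IsScalarTower.toAlgHom R (MvPolynomial P R) g.Loc)) =
      f'.comp (IsScalarTower.toAlgHom R (MvPolynomial P R) g.Loc) := by
    apply MvPolynomial.algHom_ext
    exact H
  apply AlgHom.coe_ringHom_injective
  apply IsLocalization.ringHom_ext (Submonoid.powers g.nm)
  ext x
  · exact DFunLike.congr_fun this (MvPolynomial.C x)
  · exact H x

lemma Good.exists_hom {S : Type u} [CommRing S] [Algebra R S] (y : P → S)
    (hy : ∀ p, IsUnit (g.uu y p)) : ∃ f : g.Loc →ₐ[R] S, ∀ j, f (g.taut j) = y j := by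
  have h1 := g.nm_eval (MvPolynomial.aeval y)
  simp only [MvPolynomial.aeval_X] at h1
  have h2 : IsUnit (∏ p, g.uu y p) := IsUnit.prod_univ_iff.mpr hy
  rw [h1] at h2
  have h3 := K.isUnit_of h2
  refine ⟨IsLocalization.liftAlgHom (M := Submonoid.powers g.nm) (f := MvPolynomial.aeval y) ?_, ?_⟩
  · rintro ⟨_, n, rfl⟩
    simpa using h3.pow n
  · intro j
    simp [Good.taut]

lemma Good.exists_iso (M : Matrix Q P ℤ) (N : Matrix P Q ℤ) (hMN : M * N = 1) (hNM : N * M = 1)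
    (hM : Equi M) (hN : Equi N) : Nonempty (g.Loc ≃ₐ[R] h.Loc) := by
  obtain ⟨y, hy⟩ := Corr.exists g h hN h.taut h.taut_unit
  obtain ⟨z, hz⟩ := Corr.exists h g hM g.taut g.taut_unit
  have hy' := hy
  have hz' := hz
  obtain ⟨U, V, hU, -, -⟩ := hy
  obtain ⟨U', V', hU', -, -⟩ := hz
  obtain ⟨f, hf⟩ := g.exists_hom y (fun p => hU p ▸ (U p).isUnit)
  obtain ⟨f', hf'⟩ := h.exists_hom z (fun p => hU' p ▸ (U' p).isUnit)
  refine ⟨AlgEquiv.ofAlgHom f f' ?_ ?_⟩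
  · apply h.hom_ext
    intro j
    have h1 := hz'.map h g f
    simp only [hf] at h1
    have h2 := h1.unique h g (hy'.symm g h hMN)
    simpa [hf'] using congrFun h2 j
  · apply g.hom_ext
    intro j
    have h1 := hy'.map g h f'
    simp only [hf'] at h1
    have h2 := h1.unique g h (hz'.symm h g hNM)
    simpa [hf] using congrFun h2 j

end iso
end KL

namespace KL
open KAct
open scoped TensorProduct

section good
variable {R E : Type u} [CommRing R] [CommRing E] [Algebra R E] {K : KumData R E}

/-- trivial sets are good -/
def Good.triv (K : KumData R E) (p : ℕ) [NeZero p] : Good K (TrivS p) where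
  C := 1
  D := 1
  CD := by simp
  DC := by simp
  hC s x j := by
    rw [act_triv, Matrix.one_apply]; split_ifs <;> simp
  hD s j x := by
    rw [act_triv, Matrix.one_apply]; split_ifs <;> simp

variable {P : Type} [KAct P] [Fintype P] [DecidableEq P] (g : Good K P)
variable {Q : Type} [KAct Q] [Fintype Q] [DecidableEq Q] (h : Good K Q)

/-- sums -/
def Good.sum : Good K (P ⊕ Q) where
  C := Matrix.fromBlocks g.C 0 0 h.C
  D := Matrix.fromBlocks g.D 0 0 h.D
  CD := by simp [Matrix.fromBlocks_multiply, g.CD, h.CD]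
  DC := by simp [Matrix.fromBlocks_multiply, g.DC, h.DC]
  hC := by rintro s (x | x) (y | y) <;> simp [g.hC, h.hC]
  hD := by rintro s (x | x) (y | y) <;> simp [g.hD, h.hD]

open Kronecker in
/-- products -/
def Good.prod : Good K (P × Q) where
  C := g.C ⊗ₖ h.C
  D := g.D ⊗ₖ h.D
  CD := by rw [← Matrix.mul_kronecker_mul, g.CD, h.CD, Matrix.one_kronecker_one]
  DC := by rw [← Matrix.mul_kronecker_mul, g.DC, h.DC, Matrix.one_kronecker_one]
  hC := by rintro s ⟨x, x'⟩ ⟨y, y'⟩; simp [g.hC, h.hC]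
  hD := by rintro s ⟨x, x'⟩ ⟨y, y'⟩; simp [g.hD, h.hD]

end good

section cyc
variable {F R E : Type u} [Field F] [CommRing R] [CommRing E] [Algebra R E] [Algebra F R]
  [Algebra F E] [IsScalarTower F R E] {e : ℕ} [Fact e.Prime]

/-- the Vandermonde matrix -/
def cycC (χ : AddChar (ZMod e) F) (θ : E) : Matrix (ZMod e) (ZMod e) E :=
  fun c j => (algebraMap F E (χ c) * θ) ^ j.val

/-- its inverse -/
def cycD (χ : AddChar (ZMod e) F) (θ : E) : Matrix (ZMod e) (ZMod e) E :=
  fun j c => algebraMap F E ((e : F)⁻¹) * (algebraMap F E (χ (-c)) * θ) ^ j.val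

lemma sum_pow_val (r : F) : ∑ j : ZMod e, r ^ j.val = ∑ i ∈ Finset.range e, r ^ i := by
  obtain ⟨m, rfl⟩ : ∃ m, e = m + 1 := Nat.exists_eq_succ_of_ne_zero (Fact.out : e.Prime).ne_zero
  exact Fin.sum_univ_eq_sum_range (fun i => r ^ i) (m + 1)

lemma cycCD (χ : AddChar (ZMod e) F) (hχ : Function.Injective χ) (he : (e : F) ≠ 0) (θ θ' : E)
    (hθ : θ * θ' = 1) : cycC χ θ * cycD χ θ' = 1 := by
  ext c c'
  rw [Matrix.mul_apply]
  have h1 : ∀ j : ZMod e, cycC χ θ c j * cycD χ θ' j c' =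
      algebraMap F E ((e : F)⁻¹ * (χ (c - c')) ^ j.val) := by
    intro j
    rw [cycC, cycD, sub_eq_add_neg, AddChar.map_add_eq_mul]
    simp only [map_mul, map_pow]
    rw [mul_left_comm, ← mul_pow]
    congr 2
    linear_combination algebraMap F E (χ c) * algebraMap F E (χ (-c')) * hθ
  rw [Finset.sum_congr rfl (fun j _ => h1 j), ← map_sum, ← Finset.mul_sum, sum_pow_val]
  by_cases hc : c = c'
  · subst hc
    simp [he]
  · have h2 : χ (c - c') ≠ 1 := by
      intro h
      rw [← AddChar.map_zero_eq_one χ] at h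
      exact hc (sub_eq_zero.mp (hχ h))
    have h3 : (χ (c - c')) ^ e = 1 := by
      rw [← AddChar.map_nsmul_eq_pow]
      simp
    rw [geom_sum_eq h2, h3]
    simp [hc]

/-- multiplicative lifts of the two coordinates for a prime `e` -/
structure Lift (K : KumData R E) (χ : AddChar (ZMod e) F) where
  Y : E
  Z : E
  Y' : E
  Z' : E
  hY : Y * Y' = 1
  hZ : Z * Z' = 1
  sY : ∀ s, K.sig s Y = algebraMap F E (χ (vec e s).1) * Y
  sZ : ∀ s, K.sig s Z = algebraMap F E (χ (vec e s).2) * Z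

variable {K : KumData R E} {χ : AddChar (ZMod e) F} (hχ : Function.Injective χ)
  (he : (e : F) ≠ 0) (l : Lift K χ)

lemma sig_F (s : Bool) (a : F) : K.sig s (algebraMap F E a) = algebraMap F E a := by
  rw [IsScalarTower.algebraMap_apply F R E]
  exact (K.sig s).commutes _

lemma sig_inv {s : Bool} {a : F} {b : F} (hab : a * b = 1) {θ θ' : E} (hθ : θ * θ' = 1)
    (h : K.sig s θ = algebraMap F E a * θ) : K.sig s θ' = algebraMap F E b * θ' := by
  have h1 : K.sig s θ * K.sig s θ' = 1 := by rw [← map_mul, hθ, map_one]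
  have h2 : algebraMap F E a * algebraMap F E b = 1 := by rw [← map_mul, hab, map_one]
  rw [h] at h1
  linear_combination (algebraMap F E b * θ') * h1 - (θ * θ' * K.sig s θ') * h2 - K.sig s θ' * hθ

lemma cyc_sig {s : Bool} {d : ZMod e} {θ : E} (h : K.sig s θ = algebraMap F E (χ d) * θ)
    (c j : ZMod e) : K.sig s (cycC χ θ c j) = cycC χ θ (c + d) j := by
  rw [cycC, map_pow, map_mul, sig_F, h, cycC, AddChar.map_add_eq_mul, map_mul]
  ring

lemma cyc_sigD {s : Bool} {d : ZMod e} {θ θ' : E} (hθ : θ * θ' = 1)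
    (h : K.sig s θ = algebraMap F E (χ d) * θ)
    (c j : ZMod e) : K.sig s (cycD χ θ' j c) = cycD χ θ' j (c + d) := by
  have h1 : K.sig s θ' = algebraMap F E (χ (-d)) * θ' := by
    refine sig_inv ?_ hθ h
    rw [← AddChar.map_add_eq_mul]; simp
  rw [cycD, map_mul, map_pow, map_mul, sig_F, sig_F, h1, cycD, neg_add, AddChar.map_add_eq_mul,
    map_mul]
  ring

open Kronecker in
/-- the regular set is good -/
def Good.reg : Good K (RegS e) where
  C := fun v j => cycC χ l.Y v.1 j.1 * cycC χ l.Z v.2 j.2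
  D := fun j v => cycD χ l.Y' j.1 v.1 * cycD χ l.Z' j.2 v.2
  CD := by
    have : (cycC χ l.Y ⊗ₖ cycC χ l.Z) * (cycD χ l.Y' ⊗ₖ cycD χ l.Z') = 1 := by
      rw [← Matrix.mul_kronecker_mul, cycCD χ hχ he _ _ l.hY, cycCD χ hχ he _ _ l.hZ,
        Matrix.one_kronecker_one]
    exact this
  DC := by
    have : (cycD χ l.Y' ⊗ₖ cycD χ l.Z') * (cycC χ l.Y ⊗ₖ cycC χ l.Z) = 1 := by
      rw [mul_eq_one_comm, ← Matrix.mul_kronecker_mul, cycCD χ hχ he _ _ l.hY,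
        cycCD χ hχ he _ _ l.hZ, Matrix.one_kronecker_one]
    exact this
  hC s v j := by
    rw [map_mul, cyc_sig (l.sY s), cyc_sig (l.sZ s), act_reg]
    rfl
  hD s j v := by
    rw [map_mul, cyc_sigD l.hY (l.sY s), cyc_sigD l.hZ (l.sZ s), act_reg]
    rfl

/-- Kummer generators for the quotients -/
def Lift.th : Option (ZMod e) → E
  | none => l.Y
  | some s => l.Z * l.Y ^ (e - s.val)

/-- their inverses -/
def Lift.th' : Option (ZMod e) → E
  | none => l.Y'
  | some s => l.Z' * l.Y' ^ (e - s.val)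

lemma Lift.th_mul (t : Option (ZMod e)) : l.th t * l.th' t = 1 := by
  cases t with
  | none => exact l.hY
  | some s =>
    show l.Z * l.Y ^ (e - s.val) * (l.Z' * l.Y' ^ (e - s.val)) = 1
    rw [mul_mul_mul_comm, l.hZ, ← mul_pow, l.hY]; simp

lemma Lift.th_sig (t : Option (ZMod e)) (s : Bool) :
    K.sig s (l.th t) = algebraMap F E (χ (phi t (vec e s))) * l.th t := by
  cases t with
  | none => exact l.sY s
  | some a =>
    show K.sig s (l.Z * l.Y ^ (e - a.val)) =
      algebraMap F E (χ ((vec e s).2 - a * (vec e s).1)) * (l.Z * l.Y ^ (e - a.val))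
    have h1 : (vec e s).2 - a * (vec e s).1 = (vec e s).2 + (e - a.val) • (vec e s).1 := by
      have h2 : ((e - a.val : ℕ) : ZMod e) = - a := by
        rw [Nat.cast_sub a.val_le]
        simp
      rw [nsmul_eq_mul, h2]; ring
    rw [map_mul, map_pow, l.sY, l.sZ, h1, AddChar.map_add_eq_mul, AddChar.map_nsmul_eq_pow, map_mul,
      map_pow]
    ring

/-- block Vandermonde matrix -/
def Lift.tbC : Matrix (Option (ZMod e) × ZMod e) (Option (ZMod e) × ZMod e) E :=
  fun b j => if b.1 = j.1 then cycC χ (l.th b.1) b.2 j.2 else 0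

/-- block Vandermonde matrix, inverse -/
def Lift.tbD : Matrix (Option (ZMod e) × ZMod e) (Option (ZMod e) × ZMod e) E :=
  fun j b => if j.1 = b.1 then cycD χ (l.th' b.1) j.2 b.2 else 0

lemma Lift.tbCD (hχ : Function.Injective χ) (he : (e : F) ≠ 0) : l.tbC * l.tbD = 1 := by
  ext ⟨t, c⟩ ⟨t', c'⟩
  rw [Matrix.mul_apply, Fintype.sum_prod_type, Finset.sum_eq_single t]
  · by_cases h : t = t'
    · subst h
      have h1 := congrFun (congrFun (cycCD χ hχ he _ _ (l.th_mul t)) c) c'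
      rw [Matrix.mul_apply, Matrix.one_apply] at h1
      simp only [Lift.tbC, Lift.tbD, if_true]
      rw [h1, Matrix.one_apply]
      simp
    · rw [Matrix.one_apply, if_neg (fun hh => h (Prod.ext_iff.1 hh).1)]
      simp [h, Lift.tbC, Lift.tbD]
  · intro t'' _ ht
    simp [ht.symm, Lift.tbC]
  · simp

/-- the union of quotients is good -/
def Good.tb : Good K (TB e) where
  C := l.tbC
  D := l.tbD
  CD := l.tbCD hχ he
  DC := mul_eq_one_comm.mp (l.tbCD hχ he)
  hC s b j := by
    obtain ⟨t, c⟩ := b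
    rw [act_TB]
    show K.sig s (if t = j.1 then cycC χ (l.th t) c j.2 else 0) =
      (if t = j.1 then cycC χ (l.th t) (c + phi t (vec e s)) j.2 else 0)
    split_ifs
    · rw [cyc_sig (l.th_sig t s)]
    · simp
  hD s j b := by
    obtain ⟨t, c⟩ := b
    rw [act_TB]
    show K.sig s (if j.1 = t then cycD χ (l.th' t) j.2 c else 0) =
      (if j.1 = t then cycD χ (l.th' t) j.2 (c + phi t (vec e s)) else 0)
    split_ifs
    · rw [cyc_sigD (l.th_mul t) (l.th_sig t s)]
    · simp

/-- the equivariant function to `E` -/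
def Lift.Th (b : TB e) : E := algebraMap F E (χ b.2) * l.th b.1

lemma Lift.Th_act (s : Bool) (b : TB e) : K.sig s (l.Th b) = l.Th (act s b) := by
  obtain ⟨t, c⟩ := b
  rw [act_TB]
  show K.sig s (algebraMap F E (χ c) * l.th t) =
    algebraMap F E (χ (c + phi t (vec e s))) * l.th t
  rw [map_mul, sig_F, l.th_sig, AddChar.map_add_eq_mul, map_mul]
  ring

lemma Lift.Th_pow {f g : E} (hf : l.Y ^ e = f) (hg : l.Z ^ e = g) (b : TB e) :
    l.Th b ^ e = f ∨ ∃ j : ℕ, l.Th b ^ e = g * f ^ j := by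
  obtain ⟨t, c⟩ := b
  have h1 : (algebraMap F E (χ c)) ^ e = 1 := by
    rw [← map_pow, ← AddChar.map_nsmul_eq_pow]; simp
  cases t with
  | none =>
    left
    show (algebraMap F E (χ c) * l.Y) ^ e = f
    rw [mul_pow, h1, hf, one_mul]
  | some s =>
    right
    refine ⟨e - s.val, ?_⟩
    show (algebraMap F E (χ c) * (l.Z * l.Y ^ (e - s.val))) ^ e = _
    rw [mul_pow, h1, one_mul, mul_pow, hg, pow_right_comm, hf]

end cyc

section kummer
variable {R : Type u} [CommRing R]

/-- the Kummer algebra with one generator -/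
abbrev Kum (R : Type u) [CommRing R] (n : ℕ) (f : R) : Type u :=
  AdjoinRoot (Polynomial.X ^ n - Polynomial.C f : Polynomial R)

lemma Kum.root_pow (n : ℕ) (f : R) :
    (AdjoinRoot.root (Polynomial.X ^ n - Polynomial.C f : Polynomial R)) ^ n =
      algebraMap R (Kum R n f) f := by
  have := AdjoinRoot.eval₂_root (Polynomial.X ^ n - Polynomial.C f : Polynomial R)
  rw [Polynomial.eval₂_sub, Polynomial.eval₂_pow, Polynomial.eval₂_X, Polynomial.eval₂_C,
    sub_eq_zero] at this
  exact this

/-- lift out of the Kummer algebra -/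
def Kum.lift {n : ℕ} {f : R} {S : Type*} [CommRing S] [Algebra R S] (y : S)
    (hy : y ^ n = algebraMap R S f) : Kum R n f →ₐ[R] S :=
  AdjoinRoot.liftAlgHom _ (Algebra.ofId R S) y (by
    rw [Polynomial.eval₂_sub, Polynomial.eval₂_pow, Polynomial.eval₂_X, Polynomial.eval₂_C,
      sub_eq_zero]
    exact hy)

lemma Kum.lift_root {n : ℕ} {f : R} {S : Type*} [CommRing S] [Algebra R S] (y : S)
    (hy : y ^ n = algebraMap R S f) : Kum.lift y hy (AdjoinRoot.root _) = y := by
  simp [Kum.lift]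

/-- the power basis -/
def Kum.pb [Nontrivial R] (n : ℕ) (hn : n ≠ 0) (f : R) : PowerBasis R (Kum R n f) :=
  AdjoinRoot.powerBasis' (Polynomial.monic_X_pow_sub_C f hn)

lemma Kum.pb_dim [Nontrivial R] (n : ℕ) (hn : n ≠ 0) (f : R) : (Kum.pb n hn f).dim = n := by
  simp [Kum.pb]

lemma Kum.pb_gen [Nontrivial R] (n : ℕ) (hn : n ≠ 0) (f : R) :
    (Kum.pb n hn f).gen = AdjoinRoot.root _ := by
  simp [Kum.pb]

/-- the endomorphism multiplying the root by a root of unity -/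
def Kum.rot {n : ℕ} {f : R} (z : R) (hz : z ^ n = 1) : Kum R n f →ₐ[R] Kum R n f :=
  Kum.lift (algebraMap R (Kum R n f) z * AdjoinRoot.root _) (by
    rw [mul_pow, Kum.root_pow, ← map_pow, hz, map_one, one_mul])

lemma Kum.rot_root {n : ℕ} {f : R} (z : R) (hz : z ^ n = 1) :
    Kum.rot (f := f) z hz (AdjoinRoot.root _) = algebraMap R (Kum R n f) z * AdjoinRoot.root _ :=
  Kum.lift_root _ _

/-- the Kummer algebra with two generators -/
abbrev Kum2 (R : Type u) [CommRing R] (n : ℕ) (f g : R) : Type u :=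
  Kum R n f ⊗[R] Kum R n g

/-- the two endomorphisms -/
def Kum2.sig {n : ℕ} {f g : R} (z : R) (hz : z ^ n = 1) :
    Bool → (Kum2 R n f g →ₐ[R] Kum2 R n f g)
  | false => Algebra.TensorProduct.map (Kum.rot z hz) (AlgHom.id _ _)
  | true => Algebra.TensorProduct.map (AlgHom.id _ _) (Kum.rot z hz)

/-- The eigenbasis data. -/
def Kum2.data [Nontrivial R] {n : ℕ} (hn : n ≠ 0) (f g : R) (z : R) (hz : z ^ n = 1)
    (hu : ∀ i < n, i ≠ 0 → IsUnit (z ^ i - 1)) : KumData R (Kum2 R n f g) where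
  sig := Kum2.sig z hz
  idx := Fin (Kum.pb n hn f).dim × Fin (Kum.pb n hn g).dim
  fin := inferInstance
  bas := (Kum.pb n hn f).basis.tensorProduct (Kum.pb n hn g).basis
  i0 := (⟨0, by rw [Kum.pb_dim]; omega⟩, ⟨0, by rw [Kum.pb_dim]; omega⟩)
  bas_i0 := by
    rw [Module.Basis.tensorProduct_apply, PowerBasis.basis_eq_pow, PowerBasis.basis_eq_pow]
    simp [Algebra.TensorProduct.one_def]
  c := fun s i => match s with
    | false => z ^ i.1.val
    | true => z ^ i.2.val
  eig := by
    rintro (_ | _) ⟨i, j⟩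
    · rw [Module.Basis.tensorProduct_apply, PowerBasis.basis_eq_pow, PowerBasis.basis_eq_pow,
        Kum.pb_gen, Kum.pb_gen]
      simp only [Kum2.sig, Algebra.TensorProduct.map_tmul, map_pow, Kum.rot_root, AlgHom.id_apply]
      rw [mul_pow, ← map_pow, ← Algebra.smul_def, TensorProduct.smul_tmul']
    · rw [Module.Basis.tensorProduct_apply, PowerBasis.basis_eq_pow, PowerBasis.basis_eq_pow,
        Kum.pb_gen, Kum.pb_gen]
      simp only [Kum2.sig, Algebra.TensorProduct.map_tmul, map_pow, Kum.rot_root, AlgHom.id_apply]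
      rw [mul_pow, ← map_pow, ← Algebra.smul_def, TensorProduct.tmul_smul]
  hunit := by
    rintro ⟨i, j⟩ hij
    by_cases hi : i.val = 0
    · have hj : j.val ≠ 0 := by
        intro hj
        apply hij
        ext <;> simp [hi, hj]
      exact ⟨true, hu j.val (by simpa [Kum.pb_dim] using j.isLt) hj⟩
    · exact ⟨false, hu i.val (by simpa [Kum.pb_dim] using i.isLt) hi⟩

end kummer

section final
variable {F R : Type u} [Field F] [CommRing R] [Nontrivial R] [Algebra F R]

lemma hu_of_prim {n : ℕ} {z : F} (hz : IsPrimitiveRoot z n) (i : ℕ) (hi : i < n) (h0 : i ≠ 0) :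
    IsUnit ((algebraMap F R z) ^ i - 1) := by
  rw [← map_pow, ← map_one (algebraMap F R), ← map_sub]
  exact (IsUnit.mk0 _ (sub_ne_zero.mpr (hz.pow_ne_one_of_pos_of_lt h0 hi))).map _

lemma hz_of_prim {n : ℕ} {z : F} (hz : IsPrimitiveRoot z n) : (algebraMap F R z) ^ n = 1 := by
  rw [← map_pow, hz.pow_eq_one, map_one]

/-- The data attached to a primitive root of unity. -/
def kdata {n : ℕ} (hn : n ≠ 0) {z : F} (hz : IsPrimitiveRoot z n) (f g : R) :
    KumData R (Kum2 R n f g) :=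
  Kum2.data hn f g (algebraMap F R z) (hz_of_prim hz) (hu_of_prim hz)

variable {e m n : ℕ} [Fact e.Prime]

/-- the character -/
def kchar {z : F} (hz : IsPrimitiveRoot z n) (hn : n = e * m) : AddChar (ZMod e) F :=
  AddChar.zmodChar e (ζ := z ^ m) (by rw [← pow_mul, mul_comm, ← hn, hz.pow_eq_one])

lemma kchar_inj {z : F} (hz : IsPrimitiveRoot z n) (hn : n = e * m) (hn0 : n ≠ 0) :
    Function.Injective (kchar hz hn) := by
  intro a b hab
  have hp : IsPrimitiveRoot (z ^ m) e := hz.pow (Nat.pos_of_ne_zero hn0) (by rw [hn, mul_comm])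
  rw [kchar, AddChar.zmodChar_apply, AddChar.zmodChar_apply] at hab
  exact ZMod.val_injective _ (hp.pow_inj a.val_lt b.val_lt hab)

lemma kchar_one {z : F} (hz : IsPrimitiveRoot z n) (hn : n = e * m) :
    kchar (e := e) hz hn 1 = z ^ m := by
  have : Fact (1 < e) := ⟨(Fact.out : e.Prime).one_lt⟩
  rw [kchar, AddChar.zmodChar_apply, ZMod.val_one, pow_one]

/-- the lifts -/
def klift {z : F} (hz : IsPrimitiveRoot z n) (hn : n = e * m) (hn0 : n ≠ 0) (f g f' g' : R)
    (hf : f * f' = 1) (hg : g * g' = 1) : Lift (kdata hn0 hz f g) (kchar (e := e) hz hn) where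
  Y := (AdjoinRoot.root _ ^ m) ⊗ₜ 1
  Z := 1 ⊗ₜ (AdjoinRoot.root _ ^ m)
  Y' := (algebraMap R _ f' * AdjoinRoot.root _ ^ (n - m)) ⊗ₜ 1
  Z' := 1 ⊗ₜ (algebraMap R _ g' * AdjoinRoot.root _ ^ (n - m))
  hY := by
    have hm : m ≤ n := by rw [hn]; exact Nat.le_mul_of_pos_left _ (Fact.out : e.Prime).pos
    rw [Algebra.TensorProduct.tmul_mul_tmul, mul_left_comm, ← pow_add,
      Nat.add_sub_cancel' hm, Kum.root_pow, ← map_mul, mul_comm f', hf, map_one, mul_one]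
    rfl
  hZ := by
    have hm : m ≤ n := by rw [hn]; exact Nat.le_mul_of_pos_left _ (Fact.out : e.Prime).pos
    rw [Algebra.TensorProduct.tmul_mul_tmul, mul_left_comm, ← pow_add,
      Nat.add_sub_cancel' hm, Kum.root_pow, ← map_mul, mul_comm g', hg, map_one, mul_one]
    rfl
  sY := by
    rintro (_ | _)
    · show Kum2.sig _ _ false _ = algebraMap F _ (kchar hz hn 1) * _
      rw [kchar_one]
      simp only [Kum2.sig, Algebra.TensorProduct.map_tmul, map_pow, Kum.rot_root, AlgHom.id_apply,
        map_one]
      rw [mul_pow, ← map_pow, ← Algebra.smul_def, ← TensorProduct.smul_tmul', Algebra.smul_def,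
        IsScalarTower.algebraMap_apply F R (Kum2 R n f g), map_pow]
    · show Kum2.sig _ _ true _ = algebraMap F _ (kchar hz hn 0) * _
      rw [AddChar.map_zero_eq_one]
      simp [Kum2.sig]
  sZ := by
    rintro (_ | _)
    · show Kum2.sig _ _ false _ = algebraMap F _ (kchar hz hn 0) * _
      rw [AddChar.map_zero_eq_one]
      simp [Kum2.sig]
    · show Kum2.sig _ _ true _ = algebraMap F _ (kchar hz hn 1) * _
      rw [kchar_one]
      simp only [Kum2.sig, Algebra.TensorProduct.map_tmul, map_pow, Kum.rot_root, AlgHom.id_apply,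
        map_one]
      rw [mul_pow, ← map_pow, ← Algebra.smul_def, TensorProduct.tmul_smul, Algebra.smul_def,
        IsScalarTower.algebraMap_apply F R (Kum2 R n f g), map_pow]

end final
end KL

namespace KL
open KAct
open scoped TensorProduct

section asm
variable {F R : Type u} [Field F] [CommRing R] [Nontrivial R] [Algebra F R]
variable {p q : ℕ} [Fact p.Prime] [Fact q.Prime] {z : F} (hz : IsPrimitiveRoot z (p * q))
variable (f g f' g' : R) (hf : f * f' = 1) (hg : g * g' = 1)

lemma pq_ne (p q : ℕ) [Fact p.Prime] [Fact q.Prime] : p * q ≠ 0 :=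
  mul_ne_zero (Fact.out : p.Prime).ne_zero (Fact.out : q.Prime).ne_zero

lemma pq_cast {z : F} (hz : IsPrimitiveRoot z (p * q)) : (p : F) ≠ 0 ∧ (q : F) ≠ 0 := by
  have : NeZero (p * q) := ⟨pq_ne p q⟩
  have h := hz.neZero'
  have h1 := h.out
  push_cast at h1
  exact ⟨left_ne_zero_of_mul h1, right_ne_zero_of_mul h1⟩

/-- the eigen data -/
abbrev kd := kdata (R := R) (pq_ne p q) hz f g

/-- lift at `p` -/
def lp : Lift (kd hz f g) (kchar (e := p) hz rfl) := klift hz rfl (pq_ne p q) f g f' g' hf hg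

/-- lift at `q` -/
def lq : Lift (kd hz f g) (kchar (e := q) hz (mul_comm p q)) :=
  klift hz (mul_comm p q) (pq_ne p q) f g f' g' hf hg

/-- good structure on `TA p` -/
def gA1 : Good (kd hz f g) (TA p) := (Good.triv _ p).sum
  (Good.reg (kchar_inj hz rfl (pq_ne p q)) (pq_cast hz).1 (lp hz f g f' g' hf hg))
/-- good structure on `TA q` -/
def gA2 : Good (kd hz f g) (TA q) := (Good.triv _ q).sum
  (Good.reg (kchar_inj hz (mul_comm p q) (pq_ne p q)) (pq_cast hz).2 (lq hz f g f' g' hf hg))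
/-- good structure on `TB p` -/
def gB1 : Good (kd hz f g) (TB p) :=
  Good.tb (kchar_inj hz rfl (pq_ne p q)) (pq_cast hz).1 (lp hz f g f' g' hf hg)
/-- good structure on `TB q` -/
def gB2 : Good (kd hz f g) (TB q) :=
  Good.tb (kchar_inj hz (mul_comm p q) (pq_ne p q)) (pq_cast hz).2 (lq hz f g f' g' hf hg)

/-- good structure on the first set -/
def gg1 : Good (kd hz f g) (PP1 p q) :=
  ((gA1 hz f g f' g' hf hg).prod (gA2 hz f g f' g' hf hg)).sum
    ((gB1 hz f g f' g' hf hg).prod (gB2 hz f g f' g' hf hg))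

/-- good structure on the second set -/
def gg2 : Good (kd hz f g) (PP2 p q) :=
  ((gB1 hz f g f' g' hf hg).prod (gA2 hz f g f' g' hf hg)).sum
    ((gA1 hz f g f' g' hf hg).prod (gB2 hz f g f' g' hf hg))

/-- a point of the trivial set -/
def TrivS.o (p : ℕ) : TrivS p := (0 : ZMod p)

/-- the fixed point -/
def pt0 : PP1 p q := Sum.inl (Sum.inl (TrivS.o p), Sum.inl (TrivS.o q))

lemma gg1_pt0 (j : PP1 p q) :
    (gg1 hz f g f' g' hf hg).C pt0 j = if j = pt0 then 1 else 0 := by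
  have h1 : ∀ a b, (gA1 hz f g f' g' hf hg).C (Sum.inl a) (Sum.inl b) = if b = a then 1 else 0 := by
    intro a b
    show (1 : Matrix (TrivS p) (TrivS p) _) a b = _
    rw [Matrix.one_apply]; simp [eq_comm]
  have h2 : ∀ a b, (gA2 hz f g f' g' hf hg).C (Sum.inl a) (Sum.inl b) = if b = a then 1 else 0 := by
    intro a b
    show (1 : Matrix (TrivS q) (TrivS q) _) a b = _
    rw [Matrix.one_apply]; simp [eq_comm]
  have h3 : ∀ a b, (gA1 hz f g f' g' hf hg).C (Sum.inl a) (Sum.inr b) = 0 := fun _ _ => rfl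
  have h4 : ∀ a b, (gA2 hz f g f' g' hf hg).C (Sum.inl a) (Sum.inr b) = 0 := fun _ _ => rfl
  obtain (⟨a, b⟩ | b) := j
  · show (gA1 hz f g f' g' hf hg).C (Sum.inl (TrivS.o p)) a *
      (gA2 hz f g f' g' hf hg).C (Sum.inl (TrivS.o q)) b = _
    obtain (a | a) := a <;> obtain (b | b) := b <;> simp only [h1, h2, h3, h4, pt0, mul_zero,
      zero_mul, Sum.inl.injEq, Prod.mk.injEq, reduceCtorEq, false_and, and_false, if_false]
    by_cases ha : a = TrivS.o p <;> by_cases hb : b = TrivS.o q <;> simp [ha, hb]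
  · rfl

/-- the equivariant function -/
def Theta : PP2 p q → Kum2 R (p * q) f g
  | Sum.inl x => (lp hz f g f' g' hf hg).Th x.1
  | Sum.inr x => (lq hz f g f' g' hf hg).Th x.2

lemma Theta_act (s : Bool) (x : PP2 p q) :
    (kd hz f g).sig s (Theta hz f g f' g' hf hg x) = Theta hz f g f' g' hf hg (act s x) := by
  obtain (x | x) := x
  · exact (lp hz f g f' g' hf hg).Th_act s x.1
  · exact (lq hz f g f' g' hf hg).Th_act s x.2

lemma klift_Y {e m n : ℕ} [Fact e.Prime] {z : F} (hz : IsPrimitiveRoot z n) (hn : n = e * m) (hn0 : n ≠ 0) :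
    (klift (e := e) hz hn hn0 f g f' g' hf hg).Y ^ e = algebraMap R _ f := by
  show ((AdjoinRoot.root _ ^ m) ⊗ₜ[R] 1) ^ e = _
  rw [Algebra.TensorProduct.tmul_pow, ← pow_mul, mul_comm m, ← hn, Kum.root_pow, one_pow]
  rfl

lemma klift_Z {e m n : ℕ} [Fact e.Prime] {z : F} (hz : IsPrimitiveRoot z n) (hn : n = e * m) (hn0 : n ≠ 0) :
    (klift (e := e) hz hn hn0 f g f' g' hf hg).Z ^ e = algebraMap R _ g := by
  show (1 ⊗ₜ[R] (AdjoinRoot.root _ ^ m)) ^ e = _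
  rw [Algebra.TensorProduct.tmul_pow, ← pow_mul, mul_comm m, ← hn, Kum.root_pow, one_pow,
    Algebra.TensorProduct.algebraMap_apply, Algebra.algebraMap_eq_smul_one,
    Algebra.algebraMap_eq_smul_one, TensorProduct.smul_tmul]

lemma Theta_pow (x : PP2 p q) : ∃ e, (e = p ∨ e = q) ∧
    ((Theta hz f g f' g' hf hg x) ^ e = algebraMap R _ f ∨ ∃ j : ℕ,
      (Theta hz f g f' g' hf hg x) ^ e = algebraMap R _ (g * f ^ j)) := by
  simp only [map_mul, map_pow]
  obtain (x | x) := x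
  · exact ⟨p, Or.inl rfl, (lp hz f g f' g' hf hg).Th_pow (klift_Y _ _ _ _ _ _ _ _ _) (klift_Z _ _ _ _ _ _ _ _ _) x.1⟩
  · exact ⟨q, Or.inr rfl, (lq hz f g f' g' hf hg).Th_pow (klift_Y _ _ _ _ _ _ _ _ _) (klift_Z _ _ _ _ _ _ _ _ _) x.2⟩

lemma exists_Kum2_hom (n : ℕ) (hn : n ≠ 0) (Ω : Type u) [Field Ω] [IsAlgClosed Ω] [Algebra R Ω] :
    Nonempty (Kum2 R n f g →ₐ[R] Ω) := by
  obtain ⟨y, hy⟩ := IsAlgClosed.exists_pow_nat_eq (algebraMap R Ω f) (Nat.pos_of_ne_zero hn)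
  obtain ⟨w, hw⟩ := IsAlgClosed.exists_pow_nat_eq (algebraMap R Ω g) (Nat.pos_of_ne_zero hn)
  exact ⟨Algebra.TensorProduct.productMap (Kum.lift y hy) (Kum.lift w hw)⟩

lemma gg_iso (hpq : p ≠ q) : Nonempty ((gg1 hz f g f' g' hf hg).Loc ≃ₐ[R]
    (gg2 hz f g f' g' hf hg).Loc) := by
  have hc : IsCoprime ((p : ℤ) ^ 2) ((q : ℤ) ^ 2) := by
    apply IsCoprime.pow
    exact Nat.isCoprime_iff_coprime.mpr ((Nat.coprime_primes Fact.out Fact.out).mpr hpq)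
  obtain ⟨a, b, hab⟩ := hc
  have hab' : a * (p : ℤ) ^ 2 - (-b) * (q : ℤ) ^ 2 = 1 := by linarith
  exact Good.exists_iso _ _ (MM p q a (-b)) (MN p q a (-b)) (MM_mul_MN _ _ _ _ hab')
    (MN_mul_MM _ _ _ _ hab') (equi_MM _ _ _ _) (equi_MN _ _ _ _)

end asm
end KL

namespace KL

section flt
open Polynomial

/-- The Fermat type property of a field extension. -/
def FProp (k F : Type u) [Field k] [Field F] [Algebra k F] (n : ℕ) (T : Set ℕ) : Prop :=
  ∀ e ∈ T, ∀ (x θ : F) (l : k), l ≠ 0 → l ≠ 1 →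
    (θ ^ e = x ^ n - 1 ∨ ∃ j : ℕ, θ ^ e = (x ^ n - algebraMap k F l) * (x ^ n - 1) ^ j) →
    IsAlgebraic k x

lemma flt_core {F : Type u} [Field F] {e n : ℕ} (he : e ≠ 0) (hn : n ≠ 0)
    (hin : n + 2 * e ≤ e * n) (che : (e : F) ≠ 0) (chn : (n : F) ≠ 0) {a b d : F[X]} {u l : F}
    (hab : IsCoprime a b) (ha : a ≠ 0) (hb : b ≠ 0) (hd : d ≠ 0) (hu : u ≠ 0) (hl : l ≠ 0)
    (h : C u * d ^ e = a ^ n - C l * b ^ n) : a.natDegree = 0 ∧ b.natDegree = 0 := by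
  have h1 : C 1 * a ^ n + C (-l) * b ^ n + C (-u) * d ^ e = 0 := by
    rw [C_neg, C_neg, C_1]
    linear_combination -h
  have h2 := flt_catalan (k := F) hn hn he (by nlinarith) chn chn che ha hb hd hab one_ne_zero
    (neg_ne_zero.mpr hl) (neg_ne_zero.mpr hu) h1
  exact ⟨h2.1, h2.2.1⟩

lemma coprime_core {F : Type u} [Field F] {n : ℕ} {a b : F[X]} {l : F} (hl : l ≠ 1)
    (hab : IsCoprime a b) : IsCoprime (a ^ n - C l * b ^ n) (a ^ n - b ^ n) := by
  obtain ⟨s, t, hst⟩ := hab.pow (m := n) (n := n)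
  have h1 : C (1 - l)⁻¹ * (1 - C l) = (1 : F[X]) := by
    rw [← C_1, ← C_sub, ← C_mul, inv_mul_cancel₀ (sub_ne_zero.mpr hl.symm)]
  refine ⟨C (1 - l)⁻¹ * (s + t), s - C (1 - l)⁻¹ * (s + t), ?_⟩
  linear_combination hst + (s + t) * b ^ n * h1

lemma const_of_pow {F : Type u} [Field F] {e : ℕ} (he : e ≠ 0) {c : F[X]} {r : F}
    (h : c ^ e = C r) : ∃ s, c = C s := by
  have h1 : (c ^ e).natDegree = 0 := by rw [h, natDegree_C]
  rw [natDegree_pow] at h1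
  exact ⟨_, eq_C_of_natDegree_eq_zero ((Nat.mul_eq_zero.mp h1).resolve_left he)⟩

lemma isAlg_of_pow {k F : Type u} [Field k] [Field F] [Algebra k F] {n : ℕ} (hn : n ≠ 0) {x : F}
    {l : k} (h : x ^ n = algebraMap k F l) : IsAlgebraic k x :=
  IsAlgebraic.of_pow (Nat.pos_of_ne_zero hn) (h ▸ isAlgebraic_algebraMap l)

lemma FProp.step {k F : Type u} [Field k] [Field F] [Algebra k F] {n : ℕ} {T : Set ℕ}
    (hn : n ≠ 0) (chn : (n : k) ≠ 0) (hT : ∀ e ∈ T, e ∣ n ∧ n + 2 * e ≤ e * n)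
    (H : FProp k F n T) : FProp k (RatFunc F) n T := by
  intro e heT x θ l hl0 hl1 hx
  obtain ⟨⟨m, hm⟩, hin⟩ := hT e heT
  have he : e ≠ 0 := by rintro rfl; simp at hm; exact hn hm
  have chn' : (n : F) ≠ 0 := by
    have := (_root_.map_ne_zero (algebraMap k F)).mpr chn
    simpa using this
  have che' : (e : F) ≠ 0 := by
    intro h
    apply chn'
    rw [hm, Nat.cast_mul, h, zero_mul]
  -- the reduced fraction
  obtain ⟨a, ⟨b, hb⟩, hab, hxab⟩ := IsFractionRing.exists_reduced_fraction F[X] x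
  have hab : IsCoprime a b := isRelPrime_iff_isCoprime.mp hab
  have hb0 : b ≠ 0 := nonZeroDivisors.ne_zero hb
  let i := algebraMap F[X] (RatFunc F)
  have hi : Function.Injective i := IsFractionRing.injective F[X] (RatFunc F)
  have hib : i b ≠ 0 := by rwa [Ne, map_eq_zero_iff i hi]
  have hxb : x * i b = i a := by
    rw [← hxab]; exact IsLocalization.mk'_spec _ _ _
  have hF : ∀ r : F, algebraMap F (RatFunc F) r = i (C r) := fun r => by
    rw [IsScalarTower.algebraMap_apply F F[X] (RatFunc F)]; rfl
  have hk : ∀ r : k, algebraMap k (RatFunc F) r = i (C (algebraMap k F r)) := fun r => by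
    rw [IsScalarTower.algebraMap_apply k F (RatFunc F), hF]
  by_cases ha0 : a = 0
  · rw [ha0, map_zero] at hxb
    rw [(mul_eq_zero.mp hxb).resolve_right hib]
    exact isAlgebraic_zero
  by_cases hx1 : x ^ n = 1
  · exact isAlg_of_pow hn (l := 1) (by rw [hx1, map_one])
  by_cases hxl : x ^ n = algebraMap k (RatFunc F) l
  · exact isAlg_of_pow hn hxl
  set l' : F := algebraMap k F l with hl'
  have hl0' : l' ≠ 0 := (_root_.map_ne_zero _).mpr hl0
  have hl1' : l' ≠ 1 := fun h => hl1 ((algebraMap k F).injective (h.trans (map_one _).symm))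
  have hA : i (a ^ n - C l' * b ^ n) = i b ^ n * (x ^ n - algebraMap k (RatFunc F) l) := by
    rw [map_sub, map_mul, map_pow, map_pow, ← hxb, hk, mul_pow]; ring
  have hB : i (a ^ n - b ^ n) = i b ^ n * (x ^ n - 1) := by
    rw [map_sub, map_pow, map_pow, ← hxb, mul_pow]; ring
  have hA0 : a ^ n - C l' * b ^ n ≠ 0 := by
    intro h
    rw [h, map_zero] at hA
    exact mul_ne_zero (pow_ne_zero _ hib) (sub_ne_zero.mpr hxl) hA.symm
  have hB0 : a ^ n - b ^ n ≠ 0 := by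
    intro h
    rw [h, map_zero] at hB
    exact mul_ne_zero (pow_ne_zero _ hib) (sub_ne_zero.mpr hx1) hB.symm
  have hroot : ∀ (y : RatFunc F) (w : F[X]), y ^ e = i w → ∃ c, y = i c ∧ c ^ e = w := by
    intro y w h
    have : IsIntegral F[X] y := by
      apply IsIntegral.of_pow (Nat.pos_of_ne_zero he)
      rw [h]
      exact isIntegral_algebraMap
    obtain ⟨c, hc⟩ := IsIntegrallyClosed.isIntegral_iff.mp this
    refine ⟨c, hc.symm, hi ?_⟩
    rw [map_pow, ← h]
    exact congrArg (· ^ e) hc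
  -- constants
  have key : ∃ (N : ℕ) (w : F[X]), (θ * i b ^ N) ^ e = i w ∧ a.natDegree = 0 ∧ b.natDegree = 0 ∧
      (a.natDegree = 0 → b.natDegree = 0 → ∃ r, w = C r) := by
    rcases hx with hx | ⟨j, hx⟩
    · have h1 : (θ * i b ^ m) ^ e = i (a ^ n - b ^ n) := by
        rw [hB, mul_pow, hx, ← pow_mul, mul_comm m, ← hm]; ring
      obtain ⟨c, -, hc⟩ := hroot _ _ h1
      have hc0 : c ≠ 0 := by
        rintro rfl
        exact hB0 (by rw [← hc, zero_pow he])
      obtain ⟨h2, h3⟩ := flt_core (u := 1) (l := 1) he hn hin che' chn' hab ha0 hb0 hc0 one_ne_zero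
        one_ne_zero (by simp [hc])
      refine ⟨m, _, h1, h2, h3, fun _ _ => ?_⟩
      rw [eq_C_of_natDegree_eq_zero h2, eq_C_of_natDegree_eq_zero h3]
      exact ⟨a.coeff 0 ^ n - b.coeff 0 ^ n, by simp only [C_sub, C_pow]⟩
    · have h1 : (θ * i b ^ (m * (1 + j))) ^ e = i ((a ^ n - C l' * b ^ n) * (a ^ n - b ^ n) ^ j) := by
        rw [map_mul, map_pow, hA, hB, mul_pow, hx, ← pow_mul, mul_right_comm m, mul_comm m, ← hm,
          mul_pow, ← pow_mul, mul_add, mul_one, pow_add]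
        ring
      obtain ⟨c, -, hc⟩ := hroot _ _ h1
      obtain ⟨d, v, hd⟩ := exists_associated_pow_of_mul_eq_pow'
        ((coprime_core (n := n) hl1' hab).pow_right (n := j)) hc.symm
      obtain ⟨u, hu, huv⟩ := Polynomial.isUnit_iff.mp v.isUnit
      have hd0 : d ≠ 0 := by
        rintro rfl
        exact hA0 (by rw [← hd, zero_pow he, zero_mul])
      obtain ⟨h2, h3⟩ := flt_core he hn hin che' chn' hab ha0 hb0 hd0 hu.ne_zero
        hl0' (by rw [huv, mul_comm]; exact hd)
      refine ⟨m * (1 + j), _, h1, h2, h3, fun _ _ => ?_⟩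
      rw [eq_C_of_natDegree_eq_zero h2, eq_C_of_natDegree_eq_zero h3]
      exact ⟨(a.coeff 0 ^ n - l' * b.coeff 0 ^ n) * (a.coeff 0 ^ n - b.coeff 0 ^ n) ^ j,
        by simp only [C_sub, C_pow, C_mul]⟩
  obtain ⟨N, w, hw, ha, hb, hr⟩ := key
  obtain ⟨r, rfl⟩ := hr ha hb
  obtain ⟨c, hc, hcr⟩ := hroot _ _ hw
  obtain ⟨s, rfl⟩ := const_of_pow he hcr
  obtain ⟨α, rfl⟩ : ∃ α, a = C α := ⟨_, eq_C_of_natDegree_eq_zero ha⟩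
  obtain ⟨β, rfl⟩ : ∃ β, b = C β := ⟨_, eq_C_of_natDegree_eq_zero hb⟩
  have hβ : β ≠ 0 := by rintro rfl; simp at hb0
  have hx' : x = algebraMap F (RatFunc F) (α / β) := by
    rw [map_div₀, hF, hF, eq_div_iff hib, hxb]
  have hθ' : θ = algebraMap F (RatFunc F) (s / β ^ N) := by
    rw [map_div₀, map_pow, hF, hF, eq_div_iff (pow_ne_zero _ hib), hc]
  have hj : Function.Injective (algebraMap F (RatFunc F)) := (algebraMap F _).injective
  rw [hx', isAlgebraic_algebraMap_iff hj]
  refine H e heT (α / β) (s / β ^ N) l hl0 hl1 ?_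
  rw [hx', hθ', IsScalarTower.algebraMap_apply k F (RatFunc F)] at hx
  rcases hx with hx | ⟨j, hx⟩
  · left
    apply hj
    rw [map_pow, hx, map_sub, map_pow, map_one]
  · right
    refine ⟨j, ?_⟩
    apply hj
    rw [map_pow, hx]
    simp only [map_mul, map_pow, map_sub, map_one]

lemma FProp.base (k : Type u) [Field k] (n : ℕ) (T : Set ℕ) : FProp k k n T :=
  fun _ _ x _ _ _ _ _ => isAlgebraic_algebraMap (R := k) (A := k) x

lemma exists_FProp (k : Type u) [Field k] {n : ℕ} {T : Set ℕ}
    (hn : n ≠ 0) (chn : (n : k) ≠ 0) (hT : ∀ e ∈ T, e ∣ n ∧ n + 2 * e ≤ e * n) (m : ℕ) :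
    ∃ (F : Type u) (_ : Field F) (_ : Algebra k F) (v : Fin m → F),
      AlgebraicIndependent k v ∧ FProp k F n T := by
  induction m with
  | zero => exact ⟨k, inferInstance, inferInstance, Fin.elim0,
      algebraicIndependent_empty_type_iff.mpr (algebraMap k k).injective, FProp.base k n T⟩
  | succ m ih =>
    obtain ⟨F, _, _, v, hv, H⟩ := ih
    have h1 : AlgebraicIndependent F (fun _ : Unit => (RatFunc.X : RatFunc F)) :=
      (algebraicIndependent_unique_type_iff).mpr RatFunc.transcendental_X
    have h2 := hv.sumElim_comp h1
    refine ⟨RatFunc F, inferInstance, inferInstance,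
      _, h2.comp ((finSuccEquiv m).trans ((Equiv.optionEquivSumPUnit (Fin m)).trans (Equiv.sumComm _ _)))
        (Equiv.injective _), H.step hn chn hT⟩

end flt
end KL

namespace KL
open KAct
open scoped TensorProduct

section
open scoped IntermediateField.algebraAdjoinAdjoin
lemma algind_of_closure {k Ω : Type u} [Field k] [Field Ω] [Algebra k Ω] {ι ι' : Type}
    [Finite ι] [Finite ι'] (gen : ι → Ω) (w : ι' → Ω) (hw : AlgebraicIndependent k w)
    (hc : Nat.card ι ≤ Nat.card ι')
    (h : ∀ i, IsAlgebraic (IntermediateField.adjoin k (Set.range gen)) (w i)) :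
    AlgebraicIndependent k gen := by
  let M := AlgebraicIndependent.matroid k Ω
  have h1 : Set.range w ⊆ M.closure (Set.range gen) := by
    rintro _ ⟨i, rfl⟩
    rw [AlgebraicIndependent.matroid_closure_eq]
    have := (IsFractionRing.isAlgebraic_iff (Algebra.adjoin k (Set.range gen)) (IntermediateField.adjoin k (Set.range gen)) Ω).mpr (h i)
    exact this
  have h2 : M.Indep (Set.range w) := hw.to_subtype_range
  have h3 : (Set.range w).encard ≤ M.eRk (Set.range gen) := by
    rw [← h2.eRk_eq_encard, ← M.eRk_closure_eq (Set.range gen)]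
    exact M.eRk_mono h1
  have h0 : (Nat.card ι : ℕ∞) ≤ (Set.range w).encard := by
    refine le_trans ?_ hw.injective.encard_range
    rw [ENat.card_eq_coe_natCard]
    exact_mod_cast hc
  have h4 : (Set.range gen).encard ≤ (Set.range w).encard := by
    rw [← Set.image_univ]
    refine (Set.encard_image_le _ _).trans ?_
    rw [Set.encard_univ, ENat.card_eq_coe_natCard]
    exact h0
  have h5 : M.eRk (Set.range gen) = (Set.range gen).encard :=
    le_antisymm (M.eRk_le_encard _) (h4.trans h3)
  have h6 : M.Indep (Set.range gen) :=
    (Matroid.indep_iff_eRk_eq_encard_of_finite (Set.finite_range gen)).mpr h5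
  have h7 : Function.Injective gen := by
    rw [← Set.injOn_univ]
    apply Set.finite_univ.injOn_of_encard_image_eq
    apply le_antisymm (Set.encard_image_le _ _)
    rw [Set.image_univ]
    refine le_trans ?_ (h3.trans_eq h5)
    rw [Set.encard_univ, ENat.card_eq_coe_natCard]
    exact h0
  exact (algebraicIndependent_subtype_range h7).mp h6
end

section core
variable {k R E Ξ : Type u} [Field k] [CommRing R] [Algebra k R] [CommRing E] [Algebra R E]
  [Field Ξ] [Algebra k Ξ] {K : KumData R E}
variable {P : Type} [KAct P] [Fintype P] [DecidableEq P] (g : Good K P)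

lemma Good.exists_F (r : P → E) (hr : ∀ s x, K.sig s (r x) = r (act s x)) :
    ∃ a : MvPolynomial P R, ∑ q, (1 ⊗ₜ[R] r q) * ∏ q' ∈ Finset.univ.erase q, g.uu (S := MvPolynomial P R) MvPolynomial.X q' =
      a ⊗ₜ[R] (1 : E) := by
  apply K.descent
  intro s
  simp only [map_sum, map_mul, map_prod, KumData.tau_tmul, hr, g.tau_uu]
  rw [← Equiv.sum_comp (act s) (fun q => (1 ⊗ₜ[R] r q) * ∏ q' ∈ Finset.univ.erase q, g.uu (S := MvPolynomial P R) MvPolynomial.X q')]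
  refine Finset.sum_congr rfl fun q _ => ?_
  congr 1
  refine Finset.prod_bij (fun a _ => act s a) ?_ ?_ ?_ ?_
  · intro a ha; simpa using ha
  · intro a _ b _ h; simpa using h
  · intro b hb
    refine ⟨(act s).symm b, ?_, by simp⟩
    simp only [Finset.mem_erase, Finset.mem_univ, and_true] at hb ⊢
    intro h; apply hb; rw [← h]; simp
  · intro a _; rfl

lemma T2_core (hE : Algebra.IsIntegral R E)
    (hΩ : ∀ (Ω : Type u) [Field Ω] [IsAlgClosed Ω] [Algebra R Ω], Nonempty (E →ₐ[R] Ω)) (x : R)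
    (hR : ∀ (Ω : Type u) [Field Ω] [Algebra k Ω] (φ : R →ₐ[k] Ω) (r : R),
      IsAlgebraic (IntermediateField.adjoin k {φ x}) (φ r))
    (ρ : Polynomial (MvPolynomial P R) →ₐ[k] Ξ) (hρ : ρ (Polynomial.C g.nm) = 0)
    (w : Option P → Ξ) (hw : AlgebraicIndependent k w)
    (hwr : ∀ i, w i ∈ IntermediateField.adjoin k (Set.range ρ))
    (Θ : P → E) (hΘ : ∀ s x, K.sig s (Θ x) = Θ (act s x)) :
    Transcendental k (ρ (Polynomial.C (MvPolynomial.C x))) ∧ ∃ (p0 : P) (θ : Ξ), ∀ (e : ℕ) (r : R),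
      Θ p0 ^ e = algebraMap R E r → θ ^ e = ρ (Polynomial.C (MvPolynomial.C r)) := by
  classical
  let Ω := AlgebraicClosure Ξ
  let ι : Ξ →ₐ[k] Ω := IsScalarTower.toAlgHom k Ξ Ω
  let φ : R →ₐ[k] Ω := ι.comp (ρ.comp ((Polynomial.CAlgHom (R := k)).comp (IsScalarTower.toAlgHom k R (MvPolynomial P R))))
  letI : Algebra R Ω := φ.toRingHom.toAlgebra
  obtain ⟨ε⟩ := hΩ Ω
  let ω : MvPolynomial P R →ₐ[R] Ω :=
    { (ι.comp (ρ.comp (Polynomial.CAlgHom (R := k)))).toRingHom with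
      commutes' := fun r => rfl }
  have hω : ∀ a, ω a = ι (ρ (Polynomial.C a)) := fun a => rfl
  have hφ : ∀ r, φ r = ι (ρ (Polynomial.C (MvPolynomial.C r))) := fun a => rfl
  have hφ' : ∀ r, algebraMap R Ω r = φ r := fun a => rfl
  let Sg : (MvPolynomial P R) ⊗[R] E →ₐ[R] Ω := Algebra.TensorProduct.productMap ω ε
  have hSg : ∀ a e, Sg (a ⊗ₜ e) = ω a * ε e := fun a e => by simp [Sg]
  let U : P → Ω := fun p => Sg (g.uu MvPolynomial.X p)
  have hU0 : ∏ p, U p = 0 := by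
    have := congrArg Sg g.nm_spec
    rw [map_prod, hSg, hω, hρ, map_zero, zero_mul] at this
    exact this
  obtain ⟨p0, -, hp0⟩ := Finset.prod_eq_zero_iff.mp hU0
  let gen : Option P → Ω := fun o => o.elim (ι (ρ Polynomial.X)) (fun q => if q = p0 then φ x else U q)
  let L := IntermediateField.adjoin k (Set.range gen)
  let A := algebraicClosure L Ω
  have hgen : ∀ i, gen i ∈ A := by
    intro i
    rw [mem_algebraicClosure_iff]
    have : gen i ∈ L := IntermediateField.subset_adjoin _ _ ⟨i, rfl⟩
    exact isAlgebraic_algebraMap (⟨gen i, this⟩ : L)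
  have hxA : ∀ r, φ r ∈ A := by
    intro r
    rw [mem_algebraicClosure_iff]
    have h1 := hR Ω φ r
    have h2 : IntermediateField.adjoin k {φ x} ≤ L := by
      apply IntermediateField.adjoin.mono
      rintro _ rfl
      exact ⟨some p0, by simp [gen]⟩
    letI : Algebra (IntermediateField.adjoin k {φ x}) L := (IntermediateField.inclusion h2).toRingHom.toAlgebra
    haveI : IsScalarTower (IntermediateField.adjoin k {φ x}) L Ω := IsScalarTower.of_algebraMap_eq fun _ => rfl
    exact h1.tower_top L
  have hεA : ∀ e, ε e ∈ A := by
    intro e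
    rw [mem_algebraicClosure_iff]
    obtain ⟨Q, hQ, hQe⟩ := (hE.isIntegral e).map ε
    let c : R →+* A := φ.toRingHom.codRestrict A.toSubfield.toSubring hxA
    have h1 : IsIntegral A (ε e) := by
      refine ⟨Q.map c, hQ.map c, ?_⟩
      rw [Polynomial.eval₂_map]
      exact hQe
    have h2 : IsAlgebraic A (ε e) := h1.isAlgebraic
    exact h2.restrictScalars L
  have hUA : ∀ p, U p ∈ A := by
    intro p
    by_cases h : p = p0
    · subst h; rw [hp0]; exact zero_mem _
    · have := hgen (some p)
      simpa [gen, h] using this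
  have hωX : ∀ j, ω (MvPolynomial.X j) ∈ A := by
    intro j
    have := congrArg Sg (g.D_uu (S := MvPolynomial P R) MvPolynomial.X j)
    rw [hSg, map_one, mul_one, map_sum] at this
    rw [this]
    refine sum_mem fun p _ => ?_
    rw [map_mul, hSg, map_one, one_mul]
    exact mul_mem (hεA _) (hUA p)
  have hωA : ∀ a, ω a ∈ A := by
    intro a
    induction a using MvPolynomial.induction_on with
    | C r => exact hxA r
    | add a b ha hb => rw [map_add]; exact add_mem ha hb
    | mul_X a j ha => rw [map_mul]; exact mul_mem ha (hωX j)
  have hρA : ∀ a, ι (ρ a) ∈ A := by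
    intro a
    induction a using Polynomial.induction_on with
    | C r => exact hωA r
    | add a b ha hb => rw [map_add, map_add]; exact add_mem ha hb
    | monomial n a ha =>
      rw [pow_succ, ← mul_assoc, map_mul, map_mul]
      exact mul_mem ha (hgen none)
  have hwA : ∀ i, ι (w i) ∈ A := by
    have : IntermediateField.adjoin k (Set.range ρ) ≤ (A.restrictScalars k).comap ι := by
      rw [IntermediateField.adjoin_le_iff]
      rintro _ ⟨a, rfl⟩
      exact hρA a
    exact fun i => this (hwr i)
  have hgi : AlgebraicIndependent k gen := by
    apply algind_of_closure gen (fun i => ι (w i)) (hw.map' ι.injective) le_rfl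
    intro i
    exact mem_algebraicClosure_iff.mp (hwA i)
  have hgt : ∀ i, Transcendental k (gen i) := fun i => hgi.transcendental i
  have hU1 : ∀ q, q ≠ p0 → U q ≠ 0 := by
    intro q hq h0
    apply hgt (some q)
    have : gen (some q) = 0 := by simp [gen, hq, h0]
    rw [this]
    exact isAlgebraic_zero
  constructor
  · have := hgt (some p0)
    simp only [gen, Option.elim, if_true] at this
    rw [hφ] at this
    intro h
    exact this (h.algHom ι)
  · have key : ∀ r : P → E, (∀ s x, K.sig s (r x) = r (act s x)) → ∃ a, ι (ρ (Polynomial.C a)) = ε (r p0) *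
        ∏ q' ∈ Finset.univ.erase p0, U q' := by
      intro r hr
      obtain ⟨a, ha⟩ := g.exists_F r hr
      refine ⟨a, ?_⟩
      have := congrArg Sg ha
      rw [hSg, map_one, mul_one, map_sum] at this
      rw [← hω, ← this, Finset.sum_eq_single p0]
      · rw [map_mul, hSg, map_one, one_mul, map_prod]
      · intro b _ hb
        rw [map_mul, map_prod]
        rw [Finset.prod_eq_zero (i := p0) _ hp0, mul_zero]
        simpa using hb.symm
      · simp
    obtain ⟨a, ha⟩ := key Θ hΘ
    obtain ⟨b, hb⟩ := key (fun _ => 1) (fun _ _ => map_one _)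
    refine ⟨p0, ρ (Polynomial.C a) / ρ (Polynomial.C b), fun e r her => ?_⟩
    have hι : Function.Injective ι := ι.toRingHom.injective
    apply hι
    have hne : ∏ q' ∈ Finset.univ.erase p0, U q' ≠ 0 := by
      rw [Finset.prod_ne_zero_iff]
      intro q hq
      exact hU1 q (Finset.ne_of_mem_erase hq)
    rw [map_pow, map_div₀, ha, hb, map_one, one_mul, mul_div_cancel_right₀ _ hne, ← map_pow, her,
      AlgHom.commutes, hφ', hφ]
end core
end KL

namespace KL
open KAct
open scoped TensorProduct

lemma card_PP (p q : ℕ) [Fact p.Prime] [Fact q.Prime] :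
    Fintype.card (PP1 p q) = Fintype.card (PP2 p q) ∧ p ≤ Fintype.card (PP1 p q) := by
  have hp := card_TA p
  have hq := card_TA q
  have h1 : Fintype.card (PP1 p q) = Fintype.card (TA p) * Fintype.card (TA q) + Fintype.card (TB p) * Fintype.card (TB q) := by
    rw [Fintype.card_sum, Fintype.card_prod, Fintype.card_prod]
  have h2 : Fintype.card (PP2 p q) = Fintype.card (TB p) * Fintype.card (TA q) + Fintype.card (TA p) * Fintype.card (TB q) := by
    rw [Fintype.card_sum, Fintype.card_prod, Fintype.card_prod]
  have h3 : ∀ p [Fact p.Prime], p ≤ Fintype.card (TA p) := by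
    intro p _
    have h1 : Fintype.card (TrivS p) = p := ZMod.card p
    rw [Fintype.card_sum, h1]
    exact Nat.le_add_right _ _
  constructor
  · rw [h1, h2, hp, hq]
  · rw [h1]
    have h4 := h3 p
    have h5 := h3 q
    have h6 : 1 ≤ Fintype.card (TA q) := le_trans (Fact.out : q.Prime).one_le h5
    nlinarith [Nat.zero_le (Fintype.card (TB p) * Fintype.card (TB q))]

section tower
variable {k F R Ξ : Type u} [Field k] [Field F] [CommRing R] [Nontrivial R] [Algebra k F] [Algebra F R] [Algebra k R]
  [IsScalarTower k F R] [Algebra.IsAlgebraic k F] [Field Ξ] [Algebra F Ξ] [Algebra k Ξ]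
  [IsScalarTower k F Ξ] [Algebra (Polynomial F) R] [IsScalarTower F (Polynomial F) R]

lemma hR_of (h : Polynomial F) [IsLocalization.Away h R] (Ω : Type u) [Field Ω] [Algebra k Ω] (φ : R →ₐ[k] Ω) (r : R) :
    IsAlgebraic (IntermediateField.adjoin k {φ (algebraMap (Polynomial F) R Polynomial.X)}) (φ r) := by
  set L := IntermediateField.adjoin k {φ (algebraMap (Polynomial F) R Polynomial.X)} with hL
  let A := algebraicClosure L Ω
  have hF : ∀ c : F, φ (algebraMap F R c) ∈ A := by
    intro c
    rw [mem_algebraicClosure_iff]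
    have h1 : IsAlgebraic k c := Algebra.IsAlgebraic.isAlgebraic c
    have h2 := (h1.algHom (IsScalarTower.toAlgHom k F R)).algHom φ
    exact h2.tower_top L
  have hX : φ (algebraMap (Polynomial F) R Polynomial.X) ∈ A := by
    rw [mem_algebraicClosure_iff]
    exact isAlgebraic_algebraMap (⟨_, IntermediateField.mem_adjoin_simple_self k _⟩ : L)
  have hP : ∀ P : Polynomial F, φ (algebraMap (Polynomial F) R P) ∈ A := by
    intro P
    induction P using Polynomial.induction_on with
    | C c =>
      rw [← Polynomial.algebraMap_eq, ← IsScalarTower.algebraMap_apply]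
      exact hF c
    | add a b ha hb => rw [map_add, map_add]; exact add_mem ha hb
    | monomial n a ha =>
      rw [pow_succ, ← mul_assoc, map_mul, map_mul]
      exact mul_mem ha hX
  obtain ⟨⟨P, Q⟩, hPQ⟩ := IsLocalization.surj (Submonoid.powers h) r
  simp only at hPQ
  have hu : IsUnit (φ (algebraMap (Polynomial F) R Q)) := (IsLocalization.map_units R Q).map φ
  have h1 := congrArg φ hPQ
  rw [map_mul] at h1
  have h2 : φ r = φ (algebraMap (Polynomial F) R P) / φ (algebraMap (Polynomial F) R Q) := by
    rw [eq_div_iff hu.ne_zero, h1]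
  rw [← mem_algebraicClosure_iff, h2]
  exact div_mem (hP _) (hP _)

variable {p q : ℕ} [Fact p.Prime] [Fact q.Prime] {z : F} (hz : IsPrimitiveRoot z (p * q))
variable (f g f' g' : R) (hf : f * f' = 1) (hg : g * g' = 1)
  (hf0 : f = algebraMap (Polynomial F) R (Polynomial.X ^ (p * q) - 1))
  (hg0 : g = algebraMap (Polynomial F) R (Polynomial.X ^ (p * q) - Polynomial.C z))

lemma T2_no (h : Polynomial F) [IsLocalization.Away h R] (hz : IsPrimitiveRoot z (p * q))
    (hf0 : f = algebraMap (Polynomial F) R (Polynomial.X ^ (p * q) - 1))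
    (hg0 : g = algebraMap (Polynomial F) R (Polynomial.X ^ (p * q) - Polynomial.C z))
    (H : FProp F Ξ (p * q) {p, q})
    (ρ : Polynomial (MvPolynomial (PP2 p q) R) →ₐ[k] Ξ)
    (hρ : ρ (Polynomial.C (gg2 hz f g f' g' hf hg).nm) = 0)
    (w : Option (PP2 p q) → Ξ) (hw : AlgebraicIndependent k w)
    (hwr : ∀ i, w i ∈ IntermediateField.adjoin k (Set.range ρ)) : False := by
  have : Module.Finite R (Kum R (p * q) f) := Module.Finite.of_basis (Kum.pb (p * q) (pq_ne p q) f).basis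
  have : Module.Finite R (Kum R (p * q) g) := Module.Finite.of_basis (Kum.pb (p * q) (pq_ne p q) g).basis
  have : Module.Finite R (Kum2 R (p * q) f g) := inferInstance
  have hE : Algebra.IsIntegral R (Kum2 R (p * q) f g) := inferInstance
  set x : R := algebraMap (Polynomial F) R Polynomial.X with hx
  obtain ⟨htr, p0, θ, hθ⟩ := T2_core (k := k) (gg2 hz f g f' g' hf hg) hE
    (fun Ω _ _ _ => exists_Kum2_hom f g _ (pq_ne p q) Ω) x (fun Ω _ _ φ r => hR_of h Ω φ r) ρ hρ w hw hwr
    (Theta hz f g f' g' hf hg) (Theta_act hz f g f' g' hf hg)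
  apply htr
  let σ : R →+* Ξ := ρ.toRingHom.comp (Polynomial.C.comp MvPolynomial.C)
  have hσ : ∀ r, ρ (Polynomial.C (MvPolynomial.C r)) = σ r := fun _ => rfl
  rw [hσ]
  simp only [hσ] at hθ
  let τ : F →+* Ξ := σ.comp (algebraMap F R)
  have hσf : σ f = σ x ^ (p * q) - 1 := by rw [hf0]; simp [hx]
  have hσg : σ g = σ x ^ (p * q) - τ z := by
    rw [hg0]; simp only [map_sub, map_pow, hx, ← Polynomial.algebraMap_eq, ← IsScalarTower.algebraMap_apply]; rfl
  have hn1 : 1 < p * q := by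
    have h1 := (Fact.out : p.Prime).two_le
    have h2 := (Fact.out : q.Prime).two_le
    nlinarith
  have hz' : IsPrimitiveRoot (algebraMap F Ξ z) (p * q) := hz.map_of_injective (algebraMap F Ξ).injective
  have : NeZero (p * q) := ⟨pq_ne p q⟩
  obtain ⟨i, -, hi⟩ := hz'.eq_pow_of_pow_eq_one (show τ z ^ (p * q) = 1 by rw [← map_pow, hz.1, map_one])
  rw [← map_pow] at hi
  have hl0 : z ^ i ≠ 0 := pow_ne_zero _ (hz.ne_zero (pq_ne p q))
  have hl1 : z ^ i ≠ 1 := by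
    intro h1
    rw [h1, map_one, eq_comm] at hi
    have := τ.injective (hi.trans (map_one τ).symm)
    exact hz.ne_one hn1 this
  obtain ⟨e, he, hor⟩ := Theta_pow hz f g f' g' hf hg p0
  have hfin : IsAlgebraic F (σ x) := by
    apply H e (by simpa using he) (σ x) θ (z ^ i) hl0 hl1
    obtain h1 | ⟨j, h1⟩ := hor
    · left; rw [hθ e _ h1, hσf]
    · right; refine ⟨j, ?_⟩
      rw [hθ e _ h1, map_mul, map_pow, hσf, hσg, hi]
  exact hfin.restrictScalars k

lemma T1_yes (hz : IsPrimitiveRoot z (p * q)) 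
    [IsLocalization.Away ((Polynomial.X ^ (p * q) - 1) * (Polynomial.X ^ (p * q) - Polynomial.C z) : Polynomial F) R]
    (v : Option (PP1 p q) → Ξ) (hv : AlgebraicIndependent F v) :
    ∃ ρ : Polynomial (MvPolynomial (PP1 p q) R) →ₐ[k] Ξ, ρ (Polynomial.C (gg1 hz f g f' g' hf hg).nm) = 0 ∧
      ∀ i, v i ∈ Set.range ρ := by
  classical
  set h : Polynomial F := (Polynomial.X ^ (p * q) - 1) * (Polynomial.X ^ (p * q) - Polynomial.C z) with hh
  have hne : h ≠ 0 := by
    have h1 : 0 < p * q := Nat.pos_of_ne_zero (pq_ne p q)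
    exact mul_ne_zero (Polynomial.X_pow_sub_C_ne_zero h1 (1 : F)) (Polynomial.X_pow_sub_C_ne_zero h1 z)
  have htr : Transcendental F (v (some pt0)) := hv.transcendental _
  have hunit : IsUnit ((Polynomial.aeval (v (some pt0)) : Polynomial F →ₐ[F] Ξ) h) := by
    rw [isUnit_iff_ne_zero]
    exact fun h0 => hne ((transcendental_iff.mp htr) h h0)
  let σ : R →ₐ[F] Ξ := IsLocalization.liftAlgHom (M := Submonoid.powers h) (f := Polynomial.aeval (v (some pt0))) (by
    rintro ⟨_, n, rfl⟩
    simpa using hunit.pow n)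
  have hσ : σ (algebraMap (Polynomial F) R Polynomial.X) = v (some pt0) := by
    simp [σ]
  letI : Algebra R Ξ := σ.toRingHom.toAlgebra
  haveI : IsScalarTower k R Ξ := IsScalarTower.of_algebraMap_eq fun c => by
    show _ = σ _
    rw [IsScalarTower.algebraMap_apply k F R, AlgHom.commutes, ← IsScalarTower.algebraMap_apply]
  let y : PP1 p q → Ξ := fun j => if j = pt0 then 0 else v (some j)
  let α : MvPolynomial (PP1 p q) R →ₐ[R] Ξ := MvPolynomial.aeval y
  have hnm : α (gg1 hz f g f' g' hf hg).nm = 0 := by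
    apply (kd hz f g).inj (E := Kum2 R (p * q) f g)
    rw [← Good.nm_eval, Finset.prod_eq_zero (i := pt0) (Finset.mem_univ _), TensorProduct.zero_tmul]
    simp only [Good.uu, gg1_pt0]
    apply Finset.sum_eq_zero
    intro j _
    by_cases hj : j = pt0
    · simp [hj, α, y]
    · simp [hj]
  letI : Algebra (MvPolynomial (PP1 p q) R) Ξ := α.toRingHom.toAlgebra
  haveI : IsScalarTower k (MvPolynomial (PP1 p q) R) Ξ := IsScalarTower.of_algebraMap_eq fun c => by
    show _ = α _
    rw [IsScalarTower.algebraMap_apply k R (MvPolynomial (PP1 p q) R), AlgHom.commutes, ← IsScalarTower.algebraMap_apply]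
  let ρ : Polynomial (MvPolynomial (PP1 p q) R) →ₐ[k] Ξ :=
    (Polynomial.aeval (v none) : Polynomial (MvPolynomial (PP1 p q) R) →ₐ[MvPolynomial (PP1 p q) R] Ξ).restrictScalars k
  have hρC : ∀ a, ρ (Polynomial.C a) = α a := fun a => by
    simp only [ρ, AlgHom.restrictScalars_apply, Polynomial.aeval_C]; rfl
  refine ⟨ρ, by rw [hρC, hnm], ?_⟩
  rintro (_ | j)
  · exact ⟨Polynomial.X, by simp [ρ]⟩
  · by_cases hj : j = pt0
    · subst hj
      refine ⟨Polynomial.C (MvPolynomial.C (algebraMap (Polynomial F) R Polynomial.X)), ?_⟩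
      rw [hρC, ← hσ]
      exact α.commutes _
    · refine ⟨Polynomial.C (MvPolynomial.X j), ?_⟩
      rw [hρC]
      simp [α, y, hj]
end tower

theorem ALG (k : Type u) [Field k] (d : ℕ) : ∃ (N : ℕ), d < N ∧
    ∃ (S1 S2 Ξ : Type u) (_ : CommRing S1) (_ : CommRing S2) (_ : Field Ξ) (_ : Algebra k S1) (_ : Algebra k S2)
      (_ : Algebra k Ξ) (n1 : S1) (n2 : S2), IsReduced S1 ∧ IsReduced S2 ∧ Algebra.FiniteType k S1 ∧
      Algebra.FiniteType k S2 ∧ Nonempty (S1 ≃ₐ[k] S2) ∧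
      Nonempty (Localization.Away n1 ≃ₐ[k] Localization.Away n2) ∧
      (∃ ρ : Polynomial S1 →ₐ[k] Ξ, ρ (Polynomial.C n1) = 0 ∧ ∃ v : Fin N → Ξ, AlgebraicIndependent k v ∧
        ∀ i, v i ∈ Set.range ρ) ∧
      (∀ ρ : Polynomial S2 →ₐ[k] Ξ, ρ (Polynomial.C n2) = 0 → ∀ v : Fin N → Ξ, AlgebraicIndependent k v →
        ¬ ∀ i, v i ∈ IntermediateField.adjoin k (Set.range ρ)) := by
  classical
  have hch : ∀ p : ℕ, p.Prime → ringChar k < p → (p : k) ≠ 0 := by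
    intro p hp hlt h0
    have h1 := (ringChar.spec k p).mp h0
    rcases (Nat.dvd_prime hp).mp h1 with h | h
    · have : CharP k 1 := h ▸ ringChar.charP k
      exact one_ne_zero (Nat.cast_one.symm.trans (CharP.cast_eq_zero k 1) : (1 : k) = 0)
    · omega
  obtain ⟨p, hpb, hp⟩ := Nat.exists_infinite_primes (max (d + 3) (ringChar k + 1))
  obtain ⟨q, hqb, hq⟩ := Nat.exists_infinite_primes (p + 1)
  have hpd : d + 3 ≤ p := (le_max_left _ _).trans hpb
  have hpc : ringChar k < p := (le_max_right _ _).trans hpb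
  haveI : Fact p.Prime := ⟨hp⟩
  haveI : Fact q.Prime := ⟨hq⟩
  have hpk : ((p * q : ℕ) : k) ≠ 0 := by
    push_cast
    exact mul_ne_zero (hch p hp hpc) (hch q hq (by omega))
  haveI : NeZero ((p * q : ℕ) : k) := ⟨hpk⟩
  haveI : NeZero (p * q) := ⟨pq_ne p q⟩
  let F := CyclotomicField (p * q) k
  have hcyc : IsCyclotomicExtension {p * q} k F := inferInstance
  have hfd : FiniteDimensional k F := IsCyclotomicExtension.finiteDimensional {p * q} k F
  let z : F := IsCyclotomicExtension.zeta (p * q) k F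
  have hz : IsPrimitiveRoot z (p * q) := IsCyclotomicExtension.zeta_spec (p * q) k F
  have hpF : ((p * q : ℕ) : F) ≠ 0 := by
    have := (_root_.map_ne_zero (algebraMap k F)).mpr hpk
    rwa [map_natCast] at this
  obtain ⟨hcard, hcp⟩ := card_PP p q
  let N := Fintype.card (PP1 p q) + 1
  obtain ⟨Ξ, _, _, v, hv, H⟩ := exists_FProp F (n := p * q) (T := {p, q}) (pq_ne p q) hpF (by
    rintro e (rfl | rfl)
    · have h1 : q + 2 ≤ e * q := by nlinarith
      exact ⟨Dvd.intro _ rfl, by nlinarith [Nat.mul_le_mul_left e h1]⟩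
    · have h1 : p + 2 ≤ p * e := by nlinarith
      exact ⟨Dvd.intro_left _ rfl, by nlinarith [Nat.mul_le_mul_left e h1]⟩) N
  letI : Algebra k Ξ := ((algebraMap F Ξ).comp (algebraMap k F)).toAlgebra
  haveI : IsScalarTower k F Ξ := IsScalarTower.of_algebraMap_eq fun _ => rfl
  let h : Polynomial F := (Polynomial.X ^ (p * q) - 1) * (Polynomial.X ^ (p * q) - Polynomial.C z)
  have hne : h ≠ 0 := by
    have h1 : 0 < p * q := Nat.pos_of_ne_zero (pq_ne p q)
    exact mul_ne_zero (Polynomial.X_pow_sub_C_ne_zero h1 (1 : F)) (Polynomial.X_pow_sub_C_ne_zero h1 z)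
  let R := Localization.Away h
  haveI : IsDomain R := IsLocalization.isDomain_localization (powers_le_nonZeroDivisors_of_noZeroDivisors hne)
  haveI : IsScalarTower k F R := inferInstance
  haveI : Algebra.FiniteType k F := inferInstance
  haveI : Algebra.FiniteType F R := inferInstanceAs (Algebra.FiniteType F (Localization.Away h))
  haveI : Algebra.FiniteType k R := Algebra.FiniteType.trans (S := F) inferInstance inferInstance
  have hu : IsUnit (algebraMap (Polynomial F) R h) := IsLocalization.Away.algebraMap_isUnit h
  simp only [h, map_mul] at hu
  rw [IsUnit.mul_iff] at hu
  obtain ⟨f', hf⟩ := hu.1.exists_right_inv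
  obtain ⟨g', hg⟩ := hu.2.exists_right_inv
  set f : R := algebraMap (Polynomial F) R (Polynomial.X ^ (p * q) - 1) with hf0
  set g : R := algebraMap (Polynomial F) R (Polynomial.X ^ (p * q) - Polynomial.C z) with hg0
  have hN1 : Fintype.card (Option (PP1 p q)) = Fintype.card (Fin N) := by simp [N]
  have hN2 : Fintype.card (Option (PP2 p q)) = Fintype.card (Fin N) := by simp [N, hcard]
  let e1 : Option (PP1 p q) ≃ Fin N := Fintype.equivOfCardEq hN1
  let e2 : Option (PP2 p q) ≃ Fin N := Fintype.equivOfCardEq hN2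
  refine ⟨N, by omega, MvPolynomial (PP1 p q) R, MvPolynomial (PP2 p q) R, Ξ, inferInstance, inferInstance, inferInstance,
    inferInstance, inferInstance, inferInstance, (gg1 hz f g f' g' hf hg).nm, (gg2 hz f g f' g' hf hg).nm,
    inferInstance, inferInstance, Algebra.FiniteType.trans (S := R) inferInstance inferInstance,
    Algebra.FiniteType.trans (S := R) inferInstance inferInstance, ?_, ?_, ?_, ?_⟩
  · exact ⟨(MvPolynomial.renameEquiv R (Fintype.equivOfCardEq hcard)).restrictScalars k⟩
  · obtain ⟨e⟩ := gg_iso hz f g f' g' hf hg (by omega)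
    exact ⟨e.restrictScalars k⟩
  · obtain ⟨ρ, h1, h2⟩ := T1_yes (k := k) f g f' g' hf hg hz (fun i => v (e1 i)) (hv.comp _ e1.injective)
    exact ⟨ρ, h1, v, hv.restrictScalars (algebraMap k F).injective, fun i => by
      have := h2 (e1.symm i); simpa using this⟩
  · intro ρ h1 v hv h2
    exact T2_no f g f' g' hf hg h hz hf0 hg0 H ρ h1 (fun i => v (e2 i)) (hv.comp _ e2.injective) fun i => h2 _
end KL

namespace KL

section
variable {k B B' Ξ : Type u} [Field k] [CommRing B] [CommRing B'] [Field Ξ] [Algebra k B] [Algebra k B'] [Algebra k Ξ]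

lemma prod_factor (τ : B × B' →ₐ[k] Ξ) : (∃ τ1 : B →ₐ[k] Ξ, ∀ x, τ x = τ1 x.1) ∨ (∃ τ1 : B' →ₐ[k] Ξ, ∀ x, τ x = τ1 x.2) := by
  have h1 : τ (1, 0) * τ (0, 1) = 0 := by rw [← map_mul, Prod.mk_mul_mk, mul_zero, zero_mul]; exact map_zero τ
  have h2 : τ (1, 0) + τ (0, 1) = 1 := by rw [← map_add, Prod.mk_add_mk, add_zero, zero_add]; exact map_one τ
  rcases mul_eq_zero.mp h1 with h | h
  · right
    have h3 : τ (0, 1) = 1 := by simpa [h] using h2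
    have h4 : ∀ x, τ x = τ (0, x.2) := by
      intro x
      have : x = (1, 0) * x + (0, x.2) := by ext <;> simp
      conv_lhs => rw [this]
      rw [map_add, map_mul, h, zero_mul, zero_add]
    refine ⟨AlgHom.ofLinearMap (τ.toLinearMap.comp (LinearMap.inr k B B')) h3 ?_, h4⟩
    intro x y
    show τ (0, x * y) = τ (0, x) * τ (0, y)
    rw [← map_mul]; simp
  · left
    have h3 : τ (1, 0) = 1 := by simpa [h] using h2
    have h4 : ∀ x, τ x = τ (x.1, 0) := by
      intro x
      have : x = (0, 1) * x + (x.1, 0) := by ext <;> simp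
      conv_lhs => rw [this]
      rw [map_add, map_mul, h, zero_mul, zero_add]
    refine ⟨AlgHom.ofLinearMap (τ.toLinearMap.comp (LinearMap.inl k B B')) h3 ?_, h4⟩
    intro x y
    show τ (x * y, 0) = τ (x, 0) * τ (y, 0)
    rw [← map_mul]; simp

/-- extend a hom to polynomials -/
def pext (τ : B →ₐ[k] Ξ) (s : Ξ) : Polynomial B →ₐ[k] Ξ :=
  { Polynomial.eval₂RingHom τ.toRingHom s with
    commutes' := fun r => by
      show Polynomial.eval₂ τ.toRingHom s (algebraMap k (Polynomial B) r) = _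
      rw [IsScalarTower.algebraMap_apply k B (Polynomial B), Polynomial.algebraMap_eq, Polynomial.eval₂_C]
      exact τ.commutes r }

@[simp] lemma pext_C (τ : B →ₐ[k] Ξ) (s : Ξ) (b : B) : pext τ s (Polynomial.C b) = τ b := Polynomial.eval₂_C _ _
@[simp] lemma pext_X (τ : B →ₐ[k] Ξ) (s : Ξ) : pext τ s Polynomial.X = s := Polynomial.eval₂_X _ _

lemma pext_range (τ : B →ₐ[k] Ξ) (τ' : B' →ₐ[k] Ξ) (s : Ξ) (h : ∀ b, ∃ b', τ' b' = τ b) :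
    Set.range (pext τ s) ⊆ Set.range (pext τ' s) := by
  rintro _ ⟨P, rfl⟩
  show pext τ s P ∈ (pext τ' s).range
  induction P using Polynomial.induction_on with
  | C c => obtain ⟨b', hb⟩ := h c; exact ⟨Polynomial.C b', by simp [hb]⟩
  | add a b ha hb => rw [map_add]; exact add_mem ha hb
  | monomial n a ha =>
    rw [pow_succ, ← mul_assoc, map_mul]
    exact mul_mem ha ⟨Polynomial.X, by simp⟩

lemma pext_eta (ρ : Polynomial B →ₐ[k] Ξ) :
    ρ = pext (ρ.comp (Polynomial.CAlgHom (R := k))) (ρ Polynomial.X) := by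
  apply Polynomial.algHom_ext'
  · ext b; simp
  · simp

lemma few_gens {d N : ℕ} (h : d < N) (a : Fin d → B) (ha : Algebra.adjoin k (Set.range a) = ⊤)
    (ρ : B →ₐ[k] Ξ) (v : Fin N → Ξ) (hv : AlgebraicIndependent k v)
    (hvr : ∀ i, v i ∈ IntermediateField.adjoin k (Set.range ρ)) : False := by
  let gen : Fin N → Ξ := fun i => if hi : i.1 < d then ρ (a ⟨i, hi⟩) else 0
  have h1 : IntermediateField.adjoin k (Set.range ρ) ≤ IntermediateField.adjoin k (Set.range gen) := by
    rw [IntermediateField.adjoin_le_iff]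
    have h2 : (⊤ : Subalgebra k B) ≤ ((IntermediateField.adjoin k (Set.range gen)).toSubalgebra.comap ρ) := by
      rw [← ha, Algebra.adjoin_le_iff]
      rintro _ ⟨i, rfl⟩
      apply IntermediateField.subset_adjoin
      exact ⟨⟨i, i.2.trans h⟩, by simp [gen]⟩
    rintro _ ⟨b, rfl⟩
    exact h2 (Algebra.mem_top (x := b))
  have h3 : AlgebraicIndependent k gen := algind_of_closure gen v hv le_rfl fun i =>
    isAlgebraic_algebraMap (⟨v i, h1 (hvr i)⟩ : IntermediateField.adjoin k (Set.range gen))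
  apply h3.transcendental ⟨d, h⟩
  have : gen ⟨d, h⟩ = 0 := by simp [gen]
  rw [this]
  exact isAlgebraic_zero

lemma ft_gens (B : Type u) [CommRing B] [Algebra k B] [Algebra.FiniteType k B] : ∃ (d : ℕ) (a : Fin d → B), Algebra.adjoin k (Set.range a) = ⊤ := by
  obtain ⟨s, hs⟩ := (inferInstance : Algebra.FiniteType k B).out
  refine ⟨s.card, fun i => s.equivFin.symm i, ?_⟩
  rw [← hs]
  congr 1
  ext x
  constructor
  · rintro ⟨i, rfl⟩; exact (s.equivFin.symm i).2
  · intro hx; exact ⟨s.equivFin ⟨x, hx⟩, by simp⟩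
end

/-- quotient by the radical -/
abbrev QR {S : Type u} [CommRing S] (n : S) : Type u := S ⧸ (Ideal.span {n}).radical

instance {S : Type u} [CommRing S] (n : S) : IsReduced (QR n) :=
  (Ideal.isRadical_iff_quotient_reduced _).mp (Ideal.radical_isRadical _)

theorem ALG2 (k : Type u) [Field k] (B0 B0' : Type u) [CommRing B0] [CommRing B0'] [Algebra k B0]
    [Algebra k B0'] [Algebra.FiniteType k B0'] : ∃ (N : ℕ)
      (S1 S2 Ξ : Type u) (_ : CommRing S1) (_ : CommRing S2) (_ : Field Ξ) (_ : Algebra k S1) (_ : Algebra k S2)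
      (_ : Algebra k Ξ) (n1 : S1) (n2 : S2), IsReduced S1 ∧ IsReduced S2 ∧ Algebra.FiniteType k S1 ∧
      Algebra.FiniteType k S2 ∧ Nonempty (S1 ≃ₐ[k] S2) ∧
      Nonempty (Localization.Away n1 ≃ₐ[k] Localization.Away n2) ∧
      (∃ ρ : Polynomial (B0 × QR n1) →ₐ[k] Ξ, ∃ v : Fin N → Ξ, AlgebraicIndependent k v ∧
        ∀ i, v i ∈ Set.range ρ) ∧
      (∀ ρ : Polynomial (B0' × QR n2) →ₐ[k] Ξ, ∀ v : Fin N → Ξ, AlgebraicIndependent k v →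
        ¬ ∀ i, v i ∈ IntermediateField.adjoin k (Set.range ρ)) := by
  obtain ⟨d, a, ha⟩ := ft_gens (k := k) (Polynomial B0')
  obtain ⟨N, hN, S1, S2, Ξ, _, _, _, _, _, _, n1, n2, h1, h2, h3, h4, h5, h6, ⟨ρ, h7, v, hv, h8⟩, h9⟩ := ALG k d
  refine ⟨N, S1, S2, Ξ, inferInstance, inferInstance, inferInstance, inferInstance, inferInstance, inferInstance, n1, n2, h1, h2, h3, h4, h5, h6, ?_, ?_⟩
  · let τ : S1 →ₐ[k] Ξ := ρ.comp (Polynomial.CAlgHom (R := k))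
    have hτ : ∀ x ∈ (Ideal.span {n1}).radical, τ x = 0 := by
      have : (Ideal.span {n1}).radical ≤ RingHom.ker τ := by
        rw [Ideal.IsRadical.radical_le_iff (RingHom.ker_isPrime τ).isRadical, Ideal.span_singleton_le_iff_mem]
        exact h7
      exact this
    let τ' : QR n1 →ₐ[k] Ξ := Ideal.Quotient.liftₐ _ τ hτ
    refine ⟨pext (τ'.comp (AlgHom.snd k B0 (QR n1))) (ρ Polynomial.X), v, hv, fun i => ?_⟩
    have h10 := h8 i
    rw [pext_eta ρ] at h10
    exact pext_range _ _ _ (fun b => ⟨(0, Ideal.Quotient.mk _ b), rfl⟩) h10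
  · intro ρ v hv hvr
    rcases prod_factor (ρ.comp (Polynomial.CAlgHom (R := k))) with ⟨τ, hτ⟩ | ⟨τ, hτ⟩
    · refine few_gens hN a ha (pext τ (ρ Polynomial.X)) v hv fun i => ?_
      refine IntermediateField.adjoin.mono _ _ _ ?_ (hvr i)
      conv_lhs => rw [pext_eta ρ]
      exact pext_range _ _ _ (fun b => ⟨b.1, (hτ b).symm⟩)
    · let τ' : S2 →ₐ[k] Ξ := τ.comp (Ideal.Quotient.mkₐ k _)
      refine h9 (pext τ' (ρ Polynomial.X)) ?_ v hv fun i => ?_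
      · rw [pext_C]
        show τ (Ideal.Quotient.mk _ n2) = 0
        rw [Ideal.Quotient.eq_zero_iff_mem.mpr (Ideal.le_radical (Ideal.mem_span_singleton_self n2)), map_zero]
      · refine IntermediateField.adjoin.mono _ _ _ ?_ (hvr i)
        conv_lhs => rw [pext_eta ρ]
        refine pext_range _ _ _ (fun b => ?_)
        obtain ⟨s, hs⟩ := Ideal.Quotient.mk_surjective b.2
        exact ⟨s, by rw [hτ b, ← hs]; rfl⟩
end KL

namespace KL

section
variable {k : Type u} [Field k]

def VIso (X Y : Variety k) : Prop := ∃ e : X.toScheme ≅ Y.toScheme, e.hom ≫ Y.str = X.str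

def VCut (X Y U : Variety k) : Prop := ∃ (i : Y.toScheme ⟶ X.toScheme) (j : U.toScheme ⟶ X.toScheme),
  IsClosedImmersion i ∧ IsOpenImmersion j ∧ i ≫ X.str = Y.str ∧ j ≫ X.str = U.str ∧
    Set.range j.base = (Set.range i.base)ᶜ

lemma VIso.symm {X Y : Variety k} (h : VIso X Y) : VIso Y X := by
  obtain ⟨e, he⟩ := h
  exact ⟨e.symm, by rw [← he]; simp⟩

lemma VIso.trans {X Y Z : Variety k} (h : VIso X Y) (h' : VIso Y Z) : VIso X Z := by
  obtain ⟨e, he⟩ := h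
  obtain ⟨f, hf⟩ := h'
  exact ⟨e ≪≫ f, by rw [← he, ← hf]; simp⟩

lemma cls_iso {X Y : Variety k} (h : VIso X Y) : K0Var.cls X = K0Var.cls Y := by
  refine (QuotientAddGroup.eq_iff_sub_mem).mpr (AddSubgroup.subset_closure ?_)
  exact Or.inl ⟨⟨X, trivial⟩, ⟨Y, trivial⟩, h, rfl⟩

lemma cls_cut {X Y U : Variety k} (h : VCut X Y U) : K0Var.cls X = K0Var.cls Y + K0Var.cls U := by
  obtain ⟨i, j, h⟩ := h
  have : (QuotientAddGroup.mk (FreeAbelianGroup.of ⟨X, trivial⟩) : K0Var k) =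
    QuotientAddGroup.mk (FreeAbelianGroup.of ⟨Y, trivial⟩ + FreeAbelianGroup.of ⟨U, trivial⟩) := by
    refine (QuotientAddGroup.eq_iff_sub_mem).mpr (AddSubgroup.subset_closure ?_)
    refine Or.inr ⟨⟨X, trivial⟩, ⟨Y, trivial⟩, ⟨U, trivial⟩, i, j, h.1, h.2.1, h.2.2.1, h.2.2.2.1, h.2.2.2.2, ?_⟩
    rw [sub_sub]
  exact this

instance (V : Variety k) : IsReduced V.toScheme := V.reduced
instance (V : Variety k) : IsSeparated V.str := V.separated
instance (V : Variety k) : LocallyOfFiniteType V.str := V.locallyOfFiniteType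
instance (V : Variety k) : QuasiCompact V.str := V.quasiCompact

variable (k) in
def specV (B : Type u) [CommRing B] [Algebra k B] (h1 : _root_.IsReduced B) (h2 : Algebra.FiniteType k B) : Variety k where
  toScheme := Spec (CommRingCat.of B)
  str := Spec.map (CommRingCat.ofHom (algebraMap k B))
  reduced := by
    have : _root_.IsReduced (CommRingCat.of B) := h1
    infer_instance
  separated := inferInstance
  locallyOfFiniteType := by
    rw [HasRingHomProperty.Spec_iff (P := @LocallyOfFiniteType)]
    exact RingHom.finiteType_algebraMap.mpr h2
  quasiCompact := inferInstance

variable (k) in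
def A1 : Variety k := specV k (Polynomial k) inferInstance inferInstance

lemma A1_isAff : IsAffLine (A1 k) := ⟨Iso.refl _, by simp [A1, specV]⟩

section gen
variable {S A A' X Y : Scheme.{u}} (f : X ⟶ S) (g : Y ⟶ S) (a : A ⟶ S) (a' : A' ⟶ S)

def gmap (i : Y ⟶ X) (hi : i ≫ f = g) : pullback g a ⟶ pullback f a :=
  pullback.lift (pullback.fst _ _ ≫ i) (pullback.snd _ _) (by rw [Category.assoc, hi, pullback.condition])

lemma gmap_fst (i : Y ⟶ X) (hi : i ≫ f = g) : gmap f g a i hi ≫ pullback.fst _ _ = pullback.fst _ _ ≫ i :=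
  pullback.lift_fst _ _ _

lemma gmap_snd (i : Y ⟶ X) (hi : i ≫ f = g) : gmap f g a i hi ≫ pullback.snd _ _ = pullback.snd _ _ :=
  pullback.lift_snd _ _ _

lemma gmap_str (i : Y ⟶ X) (hi : i ≫ f = g) : gmap f g a i hi ≫ pullback.fst _ _ ≫ f = pullback.fst _ _ ≫ g := by
  rw [← Category.assoc, gmap_fst, Category.assoc, hi]

lemma gmap_pb (i : Y ⟶ X) (hi : i ≫ f = g) : IsPullback (gmap f g a i hi) (pullback.fst _ _) (pullback.fst _ _) i := by
  have h1 : IsPullback (pullback.snd f a) (pullback.fst _ _) a f := (IsPullback.of_hasPullback _ _).flip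
  have h2 : IsPullback (pullback.snd g a) (pullback.fst _ _) a g := (IsPullback.of_hasPullback _ _).flip
  refine IsPullback.of_right (t := h1) ?_ (gmap_fst f g a i hi)
  rw [gmap_snd, hi]
  exact h2

lemma range_of_isPullback {P X Y Z : Scheme.{u}} {fst : P ⟶ X} {snd : P ⟶ Y} {f : X ⟶ Z} {g : Y ⟶ Z}
    (h : IsPullback fst snd f g) : Set.range fst = f ⁻¹' Set.range g := by
  rw [← Scheme.Pullback.range_fst, ← h.isoPullback_hom_fst]
  have : Function.Surjective h.isoPullback.hom := h.isoPullback.hom.surjective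
  rw [Scheme.Hom.comp_base, TopCat.coe_comp, this.range_comp]

lemma gmap_range (i : Y ⟶ X) (hi : i ≫ f = g) :
    Set.range (gmap f g a i hi) = pullback.fst f a ⁻¹' Set.range i :=
  range_of_isPullback (gmap_pb f g a i hi)

lemma gmap_iso (e : Y ≅ X) (hi : e.hom ≫ f = g) :
    ∃ E : pullback g a ≅ pullback f a, E.hom ≫ pullback.fst _ _ ≫ f = pullback.fst _ _ ≫ g := by
  have : IsIso (gmap f g a e.hom hi) :=
    MorphismProperty.of_isPullback (P := .isomorphisms _) (gmap_pb f g a e.hom hi).flip (inferInstanceAs (IsIso e.hom))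
  exact ⟨asIso (gmap f g a e.hom hi), gmap_str f g a _ hi⟩

lemma gmap_iso' (e : A' ≅ A) (hi : e.hom ≫ a = a') :
    ∃ E : pullback f a' ≅ pullback f a, E.hom ≫ pullback.fst _ _ ≫ f = pullback.fst _ _ ≫ f := by
  subst hi
  exact ⟨asIso (pullback.map f (e.hom ≫ a) f a (𝟙 _) e.hom (𝟙 _) (by simp) (by simp)), by
    rw [asIso_hom]; exact (pullback.lift_fst_assoc _ _ _ _).trans (by rw [Category.comp_id])⟩

end gen

lemma A1_iso_aff : ∃ e : Spec (CommRingCat.of (Polynomial k)) ≅ 𝔸(PUnit.{u+1}; Spec (CommRingCat.of k)),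
   e.hom ≫ (𝔸(PUnit.{u+1}; Spec (CommRingCat.of k)) ↘ Spec (CommRingCat.of k)) = Spec.map (CommRingCat.ofHom (algebraMap k (Polynomial k))) := by
  let φ : CommRingCat.of (MvPolynomial PUnit.{u+1} k) ≅ CommRingCat.of (Polynomial k) :=
    (MvPolynomial.uniqueAlgEquiv k PUnit.{u+1}).toRingEquiv.toCommRingCatIso
  refine ⟨asIso (Spec.map φ.hom) ≪≫ (AffineSpace.SpecIso PUnit.{u+1} (CommRingCat.of k)).symm, ?_⟩
  rw [Iso.trans_hom, Iso.symm_hom, Category.assoc, AffineSpace.SpecIso_inv_over, asIso_hom, ← Spec.map_comp]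
  congr 1
  ext x : 2
  exact (MvPolynomial.uniqueAlgEquiv k PUnit.{u+1}).commutes x

lemma A1_pb_iso (V : Variety k) : Nonempty (pullback V.str (A1 k).str ≅ 𝔸(PUnit.{u+1}; V.toScheme)) := by
  obtain ⟨e, he⟩ := A1_iso_aff (k := k)
  obtain ⟨E, -⟩ := gmap_iso' V.str _ (A1 k).str e he
  exact ⟨E ≪≫ (AffineSpace.isPullback_map V.str).flip.isoPullback.symm⟩

def mulA (V : Variety k) : Variety k where
  toScheme := pullback V.str (A1 k).str
  str := pullback.fst _ _ ≫ V.str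
  reduced := by
    obtain ⟨e⟩ := A1_pb_iso V
    exact isReduced_of_isOpenImmersion e.hom
  separated := inferInstance
  locallyOfFiniteType := inferInstance
  quasiCompact := inferInstance

lemma mulA_isProd (V : Variety k) : IsProductOf (mulA V) V (A1 k) := ⟨Iso.refl _, by simp [mulA]⟩

lemma prod_viso {W Z A : Variety k} (hA : IsAffLine A) (h : IsProductOf W Z A) : VIso W (mulA Z) := by
  obtain ⟨a, ha⟩ := hA
  obtain ⟨e, he⟩ := h
  obtain ⟨E, hE⟩ := gmap_iso' Z.str (A1 k).str A.str a ha
  refine ⟨e ≪≫ E, ?_⟩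
  rw [← he]
  exact (Category.assoc _ _ _).trans (congrArg (e.hom ≫ ·) hE)

lemma mulA_iso {X Y : Variety k} (h : VIso X Y) : VIso (mulA X) (mulA Y) := by
  obtain ⟨e, he⟩ := h
  exact gmap_iso Y.str X.str (A1 k).str e he

lemma mulA_cut {X Y U : Variety k} (h : VCut X Y U) : VCut (mulA X) (mulA Y) (mulA U) := by
  obtain ⟨i, j, h1, h2, h3, h4, h5⟩ := h
  refine ⟨gmap X.str Y.str (A1 k).str i h3, gmap X.str U.str (A1 k).str j h4, ?_, ?_, ?_, ?_, ?_⟩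
  · exact MorphismProperty.of_isPullback (P := @IsClosedImmersion) (gmap_pb _ _ _ i h3).flip h1
  · exact MorphismProperty.of_isPullback (P := @IsOpenImmersion) (gmap_pb _ _ _ j h4).flip h2
  · exact gmap_str _ _ _ i h3
  · exact gmap_str _ _ _ j h4
  · have e1 := gmap_range _ _ (A1 k).str i h3
    have e2 := gmap_range _ _ (A1 k).str j h4
    refine e2.trans ?_
    refine Eq.trans ?_ (congrArg _ e1.symm)
    exact congrArg (fun s => pullback.fst X.str (A1 k).str ⁻¹' s) h5

/-- the class of `V` together with that of `V × 𝔸¹`. -/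
def cc (V : Variety k) : K0Var k × K0Var k := (K0Var.cls V, K0Var.cls (mulA V))

lemma cc_iso {X Y : Variety k} (h : VIso X Y) : cc X = cc Y :=
  Prod.ext (cls_iso h) (cls_iso (mulA_iso h))

lemma cc_cut {X Y U : Variety k} (h : VCut X Y U) : cc X = cc Y + cc U :=
  Prod.ext (cls_cut h) (cls_cut (mulA_cut h))

end
end KL

namespace KL

section
variable {k : Type u} [Field k]

lemma specV_iso {B C : Type u} [CommRing B] [CommRing C] [Algebra k B] [Algebra k C] (hB1 hB2 hC1 hC2)
    (e : B ≃ₐ[k] C) : VIso (specV k B hB1 hB2) (specV k C hC1 hC2) := by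
  let φ : CommRingCat.of C ≅ CommRingCat.of B := e.symm.toRingEquiv.toCommRingCatIso
  refine ⟨(asIso (Spec.map φ.hom) : Spec (CommRingCat.of B) ≅ Spec (CommRingCat.of C)), ?_⟩
  show Spec.map φ.hom ≫ Spec.map _ = Spec.map _
  rw [← Spec.map_comp]
  congr 1
  ext x : 2
  exact e.symm.commutes x

lemma mulA_specV (B : Type u) [CommRing B] [Algebra k B] (h1 h2) (h3 h4) :
    VIso (mulA (specV k B h1 h2)) (specV k (Polynomial B) h3 h4) := by
  let φ : CommRingCat.of (Polynomial B) ≅ CommRingCat.of (TensorProduct k B (Polynomial k)) :=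
    (polyEquivTensor k B).toRingEquiv.toCommRingCatIso
  refine ⟨(pullbackSpecIso k B (Polynomial k) ≪≫ asIso (Spec.map φ.hom) : pullback _ _ ≅ Spec (CommRingCat.of (Polynomial B))), ?_⟩
  show (pullbackSpecIso k B (Polynomial k) ≪≫ asIso (Spec.map φ.hom)).hom ≫ Spec.map (CommRingCat.ofHom (algebraMap k (Polynomial B))) = pullback.fst _ _ ≫ Spec.map _
  rw [Iso.trans_hom, asIso_hom, Category.assoc, ← Spec.map_comp, ← pullbackSpecIso_hom_base]
  congr 2
  ext x : 2
  exact (polyEquivTensor k B).commutes x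

lemma cut_loc {S : Type u} [CommRing S] [Algebra k S] (n : S) (h1 h2 h3 h4 h5 h6) :
    VCut (specV k S h1 h2) (specV k (QR n) h3 h4) (specV k (Localization.Away n) h5 h6) := by
  refine ⟨Spec.map (CommRingCat.ofHom (Ideal.Quotient.mk (Ideal.span {n}).radical)),
    Spec.map (CommRingCat.ofHom (algebraMap S (Localization.Away n))), ?_, ?_, ?_, ?_, ?_⟩
  · exact IsClosedImmersion.spec_of_surjective _ Ideal.Quotient.mk_surjective
  · exact IsOpenImmersion.of_isLocalization n
  · show Spec.map _ ≫ Spec.map _ = Spec.map _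
    rw [← Spec.map_comp]; rfl
  · show Spec.map _ ≫ Spec.map _ = Spec.map _
    rw [← Spec.map_comp, ← CommRingCat.ofHom_comp, ← IsScalarTower.algebraMap_eq]
  · show Set.range (PrimeSpectrum.comap _) = (Set.range (PrimeSpectrum.comap _))ᶜ
    refine (PrimeSpectrum.localization_away_comap_range _ n).trans ?_
    refine Eq.trans ?_ (congrArg _ (_root_.range_comap_of_surjective _ _ Ideal.Quotient.mk_surjective).symm)
    rw [Ideal.mk_ker, PrimeSpectrum.zeroLocus_radical, PrimeSpectrum.zeroLocus_span, PrimeSpectrum.basicOpen_eq_zeroLocus_compl]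

lemma cut_prod {B C : Type u} [CommRing B] [CommRing C] [Algebra k B] [Algebra k C] (h1 h2 h3 h4 h5 h6) :
    VCut (specV k (B × C) h1 h2) (specV k B h3 h4) (specV k C h5 h6) := by
  refine ⟨Spec.map (CommRingCat.ofHom (RingHom.fst B C)),
    Spec.map (CommRingCat.ofHom (RingHom.snd B C)), ?_, ?_, ?_, ?_, ?_⟩
  · exact IsClosedImmersion.spec_of_surjective _ Prod.fst_surjective
  · let := (RingHom.snd B C).toAlgebra
    exact IsOpenImmersion.of_isLocalization (0, 1)
  · show Spec.map _ ≫ Spec.map _ = Spec.map _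
    rw [← Spec.map_comp]; rfl
  · show Spec.map _ ≫ Spec.map _ = Spec.map _
    rw [← Spec.map_comp]; rfl
  · show Set.range (PrimeSpectrum.comap (RingHom.snd B C)) = (Set.range (PrimeSpectrum.comap (RingHom.fst B C)))ᶜ
    rw [PrimeSpectrum.range_comap_fst, PrimeSpectrum.range_comap_snd]
    ext p
    simp only [PrimeSpectrum.mem_zeroLocus, Set.mem_compl_iff]
    have e1 : ((1 : B), (0 : C)) * (0, 1) = 0 := by ext <;> simp
    have e2 : ((1 : B), (0 : C)) + (0, 1) = 1 := by ext <;> simp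
    constructor
    · intro h h'
      have a1 := h (show ((1 : B), (0 : C)) ∈ RingHom.ker (RingHom.snd B C) from rfl)
      have a2 := h' (show ((0 : B), (1 : C)) ∈ RingHom.ker (RingHom.fst B C) from rfl)
      have := p.asIdeal.add_mem a1 a2
      rw [e2] at this
      exact p.isPrime.one_notMem this
    · intro h x hx
      have hx2 : x.2 = 0 := hx
      have hx' : x = x * (1, 0) := by ext <;> simp [hx2]
      rw [hx']
      refine p.asIdeal.mul_mem_left _ ?_
      rcases p.isPrime.mem_or_mem (show ((1 : B), (0 : C)) * (0, 1) ∈ p.asIdeal by rw [e1]; exact p.asIdeal.zero_mem) with h' | h'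
      · exact h'
      · refine (h ?_).elim
        intro y hy
        have hy2 : y.1 = 0 := hy
        have hy' : y = y * (0, 1) := by ext <;> simp [hy2]
        rw [hy']
        exact p.asIdeal.mul_mem_left _ h'

lemma affine_specV (V : Variety k) (h : IsAffine V.toScheme) : ∃ (B : Type u) (_ : CommRing B) (_ : Algebra k B)
    (h1 : _root_.IsReduced B) (h2 : Algebra.FiniteType k B), VIso V (specV k B h1 h2) := by
  let R : CommRingCat.{u} := Γ(V.toScheme, ⊤)
  let e : V.toScheme ≅ Spec R := V.toScheme.isoSpec
  obtain ⟨φ, hφ⟩ := Spec.map_surjective (e.inv ≫ V.str)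
  have hr : _root_.IsReduced R := by
    rw [← affine_isReduced_iff]; exact isReduced_of_isOpenImmersion e.inv
  have hf : φ.hom.FiniteType := by
    rw [← HasRingHomProperty.Spec_iff (P := @LocallyOfFiniteType), hφ]
    infer_instance
  refine ⟨R, inferInstance, φ.hom.toAlgebra, hr, hf, e, ?_⟩
  show e.hom ≫ Spec.map φ = V.str
  rw [hφ, Iso.hom_inv_id_assoc]

def openV (V : Variety k) (U : V.toScheme.Opens) (hU : IsAffineOpen U) : Variety k where
  toScheme := U
  str := U.ι ≫ V.str
  reduced := inferInstance
  separated := inferInstance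
  locallyOfFiniteType := inferInstance
  quasiCompact := by
    have : IsAffine U := hU
    infer_instance

lemma vi_radical {X : Scheme.{u}} (Z : TopologicalSpace.Closeds X) (U : X.affineOpens) :
    ((Scheme.IdealSheafData.vanishingIdeal Z).ideal U).IsRadical := by
  rw [Scheme.IdealSheafData.vanishingIdeal_ideal]
  exact PrimeSpectrum.isRadical_vanishingIdeal _

def closedV (V : Variety k) (Z : TopologicalSpace.Closeds V.toScheme) : Variety k where
  toScheme := (Scheme.IdealSheafData.vanishingIdeal Z).subscheme
  str := (Scheme.IdealSheafData.vanishingIdeal Z).subschemeι ≫ V.str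
  reduced := by
    apply +allowSynthFailures @IsReduced.of_openCover (𝒰 := (Scheme.IdealSheafData.vanishingIdeal Z).subschemeCover.openCover)
    intro U
    show IsReduced (Spec (CommRingCat.of (_ ⧸ (Scheme.IdealSheafData.vanishingIdeal Z).ideal U)))
    rw [affine_isReduced_iff]
    refine (Ideal.isRadical_iff_quotient_reduced _).mp ?_
    exact vi_radical Z U
  separated := inferInstance
  locallyOfFiniteType := inferInstance
  quasiCompact := inferInstance

lemma subι_closed {X : Scheme.{u}} (I : X.IdealSheafData) : IsClosedImmersion I.subschemeι := inferInstance

lemma cut_open (V : Variety k) (U : V.toScheme.Opens) (hU : IsAffineOpen U) :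
    VCut V (closedV V ⟨(U : Set V.toScheme)ᶜ, U.2.isClosed_compl⟩) (openV V U hU) := by
  refine ⟨(Scheme.IdealSheafData.vanishingIdeal _).subschemeι, U.ι, ?_, ?_, rfl, rfl, ?_⟩
  · exact subι_closed _
  · show IsOpenImmersion U.ι
    infer_instance
  · refine Eq.trans (Scheme.Opens.range_ι U) ?_
    refine Eq.trans ?_ (congrArg _ (Scheme.IdealSheafData.range_subschemeι _).symm)
    rw [Scheme.IdealSheafData.coe_support_vanishingIdeal]
    simp

theorem affinize (l : ℕ) : ∀ (V : Variety k) (U : Fin l → V.toScheme.Opens), (∀ i, IsAffineOpen (U i)) →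
    (∀ x, ∃ i, x ∈ U i) → ∃ (B : Type u) (_ : CommRing B) (_ : Algebra k B)
    (h1 : _root_.IsReduced B) (h2 : Algebra.FiniteType k B), cc V = cc (specV k B h1 h2) := by
  induction l with
  | zero =>
    intro V U _ h
    have : IsEmpty V.toScheme := ⟨fun x => (h x).choose.elim0⟩
    obtain ⟨B, i1, i2, h1, h2, h⟩ := affine_specV V inferInstance
    exact ⟨B, i1, i2, h1, h2, cc_iso h⟩
  | succ l ih =>
    intro V U hU h
    have hcut := cut_open V (U 0) (hU 0)
    obtain ⟨i, hi, hi2⟩ : ∃ i : (closedV V ⟨((U 0 : V.toScheme.Opens) : Set V.toScheme)ᶜ, (U 0).2.isClosed_compl⟩).toScheme ⟶ V.toScheme,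
       IsClosedImmersion i ∧ ∀ x, i x ∉ U 0 := by
      refine ⟨(Scheme.IdealSheafData.vanishingIdeal _).subschemeι, subι_closed _, ?_⟩
      intro x
      have := Set.mem_range_self (f := (Scheme.IdealSheafData.vanishingIdeal (X := V.toScheme) ⟨((U 0 : V.toScheme.Opens) : Set V.toScheme)ᶜ, (U 0).2.isClosed_compl⟩).subschemeι) x
      rw [Scheme.IdealSheafData.range_subschemeι, Scheme.IdealSheafData.coe_support_vanishingIdeal] at this
      exact this
    obtain ⟨B, i1, i2, h1, h2, hB⟩ := affine_specV (openV V (U 0) (hU 0)) (hU 0)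
    obtain ⟨C, j1, j2, h3, h4, hC⟩ := ih (closedV V ⟨((U 0 : V.toScheme.Opens) : Set V.toScheme)ᶜ, (U 0).2.isClosed_compl⟩)
      (fun j => i ⁻¹ᵁ U j.succ) (fun j => (hU j.succ).preimage i) (fun x => by
        obtain ⟨j, hj⟩ := h (i x)
        rcases Fin.eq_zero_or_eq_succ j with rfl | ⟨j, rfl⟩
        · exact (hi2 x hj).elim
        · exact ⟨j, hj⟩)
    have h5 : _root_.IsReduced (C × B) := inferInstance
    have h6 : Algebra.FiniteType k (C × B) := inferInstance
    refine ⟨C × B, inferInstance, inferInstance, h5, h6, ?_⟩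
    rw [cc_cut hcut, cc_cut (cut_prod h5 h6 h3 h4 h1 h2), hC, cc_iso hB]

theorem affinize' (V : Variety k) : ∃ (B : Type u) (_ : CommRing B) (_ : Algebra k B)
    (h1 : _root_.IsReduced B) (h2 : Algebra.FiniteType k B), cc V = cc (specV k B h1 h2) := by
  have : CompactSpace V.toScheme := (quasiCompact_iff_compactSpace (f := V.str)).mp inferInstance
  let 𝒰 := V.toScheme.affineCover.finiteSubcover
  obtain ⟨n, ⟨e⟩⟩ := Finite.exists_equiv_fin 𝒰.I₀
  refine affinize n V (fun j => (𝒰.f (e.symm j)).opensRange) (fun j => isAffineOpen_opensRange _) (fun x => ?_)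
  obtain ⟨i, y, hy⟩ := 𝒰.exists_eq x
  exact ⟨e i, by rw [Equiv.symm_apply_apply]; exact ⟨y, hy⟩⟩

end
end KL

namespace KL

section
variable (k Ξ : Type u) [Field k] [Field Ξ] [Algebra k Ξ] (N : ℕ)

def QP (X : Scheme.{u}) (s : X ⟶ Spec (CommRingCat.of k)) : Prop :=
  ∃ (x : X) (ψ : X.residueField x ⟶ CommRingCat.of Ξ),
    Spec.map ψ ≫ X.fromSpecResidueField x ≫ s = Spec.map (CommRingCat.ofHom (algebraMap k Ξ)) ∧
    ∃ v : Fin N → Ξ, AlgebraicIndependent k v ∧ ∀ i, ∃ y, ψ.hom y = v i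

variable {k Ξ N}

lemma rf_bij {X Y : Scheme.{u}} (f : X ⟶ Y) [IsPreimmersion f] (x : X) :
    Function.Bijective (f.residueFieldMap x).hom := by
  refine ⟨RingHom.injective _, ?_⟩
  have h : Function.Surjective (f.stalkMap x ≫ X.residue x).hom := by
    rw [CommRingCat.hom_comp]
    exact (X.residue_surjective x).comp (f.stalkMap_surjective x)
  rw [← Scheme.residue_residueFieldMap, CommRingCat.hom_comp] at h
  intro y
  obtain ⟨z, hz⟩ := h y
  exact ⟨(Y.residue (f x)).hom z, hz⟩

lemma QP_push {X Y : Scheme.{u}} {s : X ⟶ Spec (CommRingCat.of k)} {t : Y ⟶ Spec (CommRingCat.of k)}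
    (f : X ⟶ Y) (hf : IsPreimmersion f) (h : f ≫ t = s) (H : QP k Ξ N X s) : QP k Ξ N Y t := by
  obtain ⟨x, ψ, h1, v, hv, h2⟩ := H
  refine ⟨f x, f.residueFieldMap x ≫ ψ, ?_, v, hv, fun i => ?_⟩
  · rw [Spec.map_comp, Category.assoc, Scheme.Hom.SpecMap_residueFieldMap_fromSpecResidueField_assoc, h, h1]
  · obtain ⟨y, hy⟩ := h2 i
    obtain ⟨z, rfl⟩ := (rf_bij f x).2 y
    exact ⟨z, hy⟩

lemma QP_pull {X Y : Scheme.{u}} {s : X ⟶ Spec (CommRingCat.of k)} {t : Y ⟶ Spec (CommRingCat.of k)}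
    (f : X ⟶ Y) (hf : IsPreimmersion f) (h : f ≫ t = s) (x : X)
    (ψ : Y.residueField (f x) ⟶ CommRingCat.of Ξ)
    (h1 : Spec.map ψ ≫ Y.fromSpecResidueField (f x) ≫ t = Spec.map (CommRingCat.ofHom (algebraMap k Ξ)))
    (h2 : ∃ v : Fin N → Ξ, AlgebraicIndependent k v ∧ ∀ i, ∃ y, ψ.hom y = v i) : QP k Ξ N X s := by
  let E := RingEquiv.ofBijective _ (rf_bij f x)
  have hE : IsIso (f.residueFieldMap x) := E.toCommRingCatIso.isIso_hom
  refine ⟨x, inv (f.residueFieldMap x) ≫ ψ, ?_, ?_⟩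
  · rw [← h, ← Scheme.Hom.SpecMap_residueFieldMap_fromSpecResidueField_assoc,
      ← Spec.map_comp_assoc, IsIso.hom_inv_id_assoc, h1]
  · obtain ⟨v, hv, h2⟩ := h2
    refine ⟨v, hv, fun i => ?_⟩
    obtain ⟨y, hy⟩ := h2 i
    refine ⟨(f.residueFieldMap x).hom y, ?_⟩
    rw [← hy, ← RingHom.comp_apply, ← CommRingCat.hom_comp, IsIso.hom_inv_id_assoc]

lemma QP_pw {X Y : Variety k} (h : PiecewiseIso X Y) (H : QP k Ξ N X.toScheme X.str) : QP k Ξ N Y.toScheme Y.str := by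
  obtain ⟨m, P, Q, f, g, h1, h2, h3, h4, -, -, h5, -, h6⟩ := h
  obtain ⟨x, ψ, a1, a2⟩ := H
  have hx : x ∈ ⋃ i, Set.range (f i).base := by rw [h5]; trivial
  obtain ⟨i, y, rfl⟩ := Set.mem_iUnion.mp hx
  have b1 := QP_pull (N := N) (f i) (h1 i).toIsPreimmersion (h3 i) y ψ a1 a2
  obtain ⟨e, he⟩ := h6 i
  have b2 := QP_push e.hom inferInstance he b1
  exact QP_push (g i) (h2 i).toIsPreimmersion (h4 i) b2

lemma QP_iso {X Y : Variety k} (h : VIso X Y) (H : QP k Ξ N X.toScheme X.str) : QP k Ξ N Y.toScheme Y.str := by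
  obtain ⟨e, he⟩ := h
  exact QP_push e.hom inferInstance he H

lemma QP_of_alg {B : Type u} [CommRing B] [Algebra k B] (ρ : B →ₐ[k] Ξ) (v : Fin N → Ξ)
    (hv : AlgebraicIndependent k v) (h : ∀ i, v i ∈ Set.range ρ) :
    QP k Ξ N (Spec (CommRingCat.of B)) (Spec.map (CommRingCat.ofHom (algebraMap k B))) := by
  let g : Spec (CommRingCat.of Ξ) ⟶ Spec (CommRingCat.of B) := Spec.map (CommRingCat.ofHom ρ.toRingHom)
  have hg := Scheme.descResidueField_stalkClosedPointTo_fromSpecResidueField Ξ _ g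
  generalize Scheme.descResidueField (Scheme.stalkClosedPointTo g) = ψ at hg
  refine ⟨_, ψ, ?_, v, hv, fun i => ?_⟩
  · rw [← Category.assoc, hg, ← Spec.map_comp]
    congr 1
    ext x : 2
    exact ρ.commutes x
  · rw [← Scheme.Spec.map_residueFieldIso_inv_eq_fromSpecResidueField, ← Spec.map_comp, ← Spec.map_comp] at hg
    have hg' := Spec.map_injective hg
    obtain ⟨b, hb⟩ := h i
    refine ⟨(CommRingCat.ofHom (algebraMap B _) ≫ (Scheme.Spec.residueFieldIso (CommRingCat.of B) _).inv).hom b, ?_⟩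
    rw [← hb, ← RingHom.comp_apply, ← CommRingCat.hom_comp, Category.assoc]
    exact congrArg (fun z : CommRingCat.of B ⟶ CommRingCat.of Ξ => z.hom b) hg'

lemma alg_of_QP {B : Type u} [CommRing B] [Algebra k B]
    (H : QP k Ξ N (Spec (CommRingCat.of B)) (Spec.map (CommRingCat.ofHom (algebraMap k B)))) :
    ∃ (ρ : B →ₐ[k] Ξ) (v : Fin N → Ξ), AlgebraicIndependent k v ∧
      ∀ i, v i ∈ IntermediateField.adjoin k (Set.range ρ) := by
  obtain ⟨x, ψ, h1, v, hv, h2⟩ := H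
  rw [← Scheme.Spec.map_residueFieldIso_inv_eq_fromSpecResidueField, Category.assoc, ← Spec.map_comp, ← Spec.map_comp, ← Spec.map_comp] at h1
  have h1' := Spec.map_injective h1
  have hp : (x.asIdeal : Ideal B).IsPrime := PrimeSpectrum.isPrime x
  let τ : x.asIdeal.ResidueField →+* Ξ := ((Scheme.Spec.residueFieldIso (CommRingCat.of B) x).inv ≫ ψ).hom
  let ρ : B →ₐ[k] Ξ := { τ.comp (algebraMap B x.asIdeal.ResidueField) with
    commutes' := fun c => congrArg (fun z : CommRingCat.of k ⟶ CommRingCat.of Ξ => z.hom c) h1' }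
  refine ⟨ρ, v, hv, fun i => ?_⟩
  obtain ⟨y, hy⟩ := h2 i
  let z : x.asIdeal.ResidueField := (Scheme.Spec.residueFieldIso (CommRingCat.of B) x).hom.hom y
  have hz : τ z = v i := by
    rw [← hy]
    show (((Scheme.Spec.residueFieldIso (CommRingCat.of B) x).inv ≫ ψ).hom.comp (Scheme.Spec.residueFieldIso (CommRingCat.of B) x).hom.hom) y = _
    rw [← CommRingCat.hom_comp, Iso.hom_inv_id_assoc]
  obtain ⟨a, b, hb, hab⟩ := IsFractionRing.div_surjective (A := B ⧸ x.asIdeal) z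
  obtain ⟨a, rfl⟩ := Ideal.Quotient.mk_surjective a
  obtain ⟨b, rfl⟩ := Ideal.Quotient.mk_surjective b
  have : v i = ρ a / ρ b := by
    rw [← hz, ← hab, map_div₀]
    rfl
  rw [this]
  exact div_mem (IntermediateField.subset_adjoin _ _ ⟨a, rfl⟩) (IntermediateField.subset_adjoin _ _ ⟨b, rfl⟩)

end
end KL

namespace KL

section
variable {k : Type u} [Field k]

/-- Differences of classes of affine varieties, together with their products with the line. -/
def IsG (p : K0Var k × K0Var k) : Prop :=
  ∃ (B C : Type u) (_ : CommRing B) (_ : CommRing C) (_ : Algebra k B) (_ : Algebra k C)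
    (h1 : _root_.IsReduced B) (h2 : Algebra.FiniteType k B)
    (h3 : _root_.IsReduced C) (h4 : Algebra.FiniteType k C),
    p = cc (specV k B h1 h2) - cc (specV k C h3 h4)

lemma cc_prod {B C : Type u} [CommRing B] [CommRing C] [Algebra k B] [Algebra k C] (h1 h2 h3 h4) :
    ∃ h5 h6, cc (specV k (B × C) h5 h6) = cc (specV k B h1 h2) + cc (specV k C h3 h4) := by
  have h5 : _root_.IsReduced (B × C) := inferInstance
  have h6 : Algebra.FiniteType k (B × C) := inferInstance
  exact ⟨h5, h6, cc_cut (cut_prod h5 h6 h1 h2 h3 h4)⟩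

lemma IsG_add {p q : K0Var k × K0Var k} (hp : IsG p) (hq : IsG q) : IsG (p + q) := by
  obtain ⟨B, C, _, _, _, _, h1, h2, h3, h4, rfl⟩ := hp
  obtain ⟨B', C', _, _, _, _, h1', h2', h3', h4', rfl⟩ := hq
  obtain ⟨a1, a2, a⟩ := cc_prod h1 h2 h1' h2'
  obtain ⟨b1, b2, b⟩ := cc_prod h3 h4 h3' h4'
  refine ⟨B × B', C × C', _, _, _, _, a1, a2, b1, b2, ?_⟩
  rw [a, b]; abel

lemma IsG_neg {p : K0Var k × K0Var k} (hp : IsG p) : IsG (-p) := by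
  obtain ⟨B, C, _, _, _, _, h1, h2, h3, h4, rfl⟩ := hp
  exact ⟨C, B, _, _, _, _, h3, h4, h1, h2, by abel⟩

lemma IsG_zero : IsG (0 : K0Var k × K0Var k) := by
  have h1 : _root_.IsReduced k := inferInstance
  have h2 : Algebra.FiniteType k k := inferInstance
  exact ⟨k, k, inferInstance, inferInstance, inferInstance, inferInstance, h1, h2, h1, h2, by abel⟩

variable (k) in
/-- The subgroup of all differences. -/
def GG : AddSubgroup (K0Var k × K0Var k) where
  carrier := {p | IsG p}
  add_mem' := IsG_add
  zero_mem' := IsG_zero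
  neg_mem' := IsG_neg

lemma IsG_cc (V : Variety k) : IsG (cc V) := by
  have h1 : _root_.IsReduced k := inferInstance
  have h2 : Algebra.FiniteType k k := inferInstance
  obtain ⟨B, _, _, h3, h4, h⟩ := affinize' V
  obtain ⟨a1, a2, a⟩ := cc_prod h3 h4 h1 h2
  exact ⟨B × k, k, _, inferInstance, _, inferInstance, a1, a2, h1, h2, by rw [a, h]; abel⟩

lemma IsG_of_mul (χ : K0Var k) (h : MulLZero χ) : IsG (χ, (0 : K0Var k)) := by
  obtain ⟨m, c, Z, W, h1, h2, h3⟩ := h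
  have h4 : ∀ i, K0Var.cls (W i) = K0Var.cls (mulA (Z i)) := by
    intro i
    obtain ⟨A, hA, hW⟩ := h1 i
    exact cls_iso (prod_viso hA hW)
  have h5 : (χ, (0 : K0Var k)) = ∑ i, c i • cc (Z i) := by
    refine Prod.ext ?_ ?_
    · rw [Prod.fst_sum]; exact h2
    · rw [Prod.snd_sum]
      refine h3.trans (Finset.sum_congr rfl fun i _ => ?_)
      rw [h4 i]; rfl
  rw [h5]
  exact (GG k).sum_mem fun i _ => (GG k).zsmul_mem (IsG_cc (Z i)) _

lemma cc_loc {S : Type u} [CommRing S] [Algebra k S] (n : S) (h1 : _root_.IsReduced S) (h2 : Algebra.FiniteType k S) :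
    ∃ h3 h4 h5 h6, cc (specV k S h1 h2) = cc (specV k (QR n) h3 h4) + cc (specV k (Localization.Away n) h5 h6) := by
  have h3 : _root_.IsReduced (QR n) := inferInstance
  have h4 : Algebra.FiniteType k (QR n) := inferInstance
  have h5 : _root_.IsReduced (Localization.Away n) := isReduced_localizationPreserves (Submonoid.powers n) _ h1
  have h6 : Algebra.FiniteType k (Localization.Away n) :=
    Algebra.FiniteType.trans h2 (IsLocalization.finiteType_of_monoid_fg (Submonoid.powers n) _)
  exact ⟨h3, h4, h5, h6, cc_cut (cut_loc n h1 h2 h3 h4 h5 h6)⟩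

lemma poly_red {R : Type u} [CommRing R] (h : _root_.IsReduced R) : _root_.IsReduced (Polynomial R) := by
  refine ⟨fun p hp => ?_⟩
  ext i
  exact (Polynomial.isNilpotent_iff.mp hp i).eq_zero

theorem final (χ : K0Var k) (hLχ : MulLZero χ) :
    ∃ (X Y A XA YA : Variety k),
      IsAffLine A ∧ IsProductOf XA X A ∧ IsProductOf YA Y A ∧
      χ = K0Var.cls X - K0Var.cls Y ∧
      K0Var.cls XA = K0Var.cls YA ∧
      ¬ PiecewiseIso XA YA := by
  obtain ⟨B0, B0', _, _, _, _, b1, b2, b3, b4, hb⟩ := IsG_of_mul χ hLχ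
  obtain ⟨N, S1, S2, Ξ, _, _, _, _, _, _, n1, n2, r1, r2, f1, f2, ⟨e⟩, ⟨e'⟩, ⟨ρ, v, hv, hρ⟩, hno⟩ :=
    ALG2 k B0 B0'
  obtain ⟨c1, c2, c3, c4, hc⟩ := cc_loc n1 r1 f1
  obtain ⟨d1, d2, d3, d4, hd⟩ := cc_loc n2 r2 f2
  have hQ : cc (specV k (QR n1) c1 c2) = cc (specV k (QR n2) d1 d2) := by
    rw [cc_iso (specV_iso r1 f1 r2 f2 e), cc_iso (specV_iso c3 c4 d3 d4 e'), hd] at hc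
    exact (add_right_cancel hc).symm
  obtain ⟨p1, p2, hp⟩ := cc_prod b1 b2 c1 c2
  obtain ⟨q1, q2, hq⟩ := cc_prod b3 b4 d1 d2
  have key : (χ, (0 : K0Var k)) = cc (specV k (B0 × QR n1) p1 p2) - cc (specV k (B0' × QR n2) q1 q2) := by
    rw [hp, hq, hQ, hb]; abel
  refine ⟨specV k (B0 × QR n1) p1 p2, specV k (B0' × QR n2) q1 q2, A1 k, mulA _, mulA _, A1_isAff,
    mulA_isProd _, mulA_isProd _, congrArg Prod.fst key, (sub_eq_zero.mp (congrArg Prod.snd key).symm), ?_⟩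
  intro hpw
  have s1 : _root_.IsReduced (Polynomial (B0 × QR n1)) := poly_red p1
  have s2 : Algebra.FiniteType k (Polynomial (B0 × QR n1)) := Algebra.FiniteType.trans p2 inferInstance
  have t1 : _root_.IsReduced (Polynomial (B0' × QR n2)) := poly_red q1
  have t2 : Algebra.FiniteType k (Polynomial (B0' × QR n2)) := Algebra.FiniteType.trans q2 inferInstance
  have w1 : QP k Ξ N (specV k _ s1 s2).toScheme (specV k _ s1 s2).str := QP_of_alg ρ v hv hρ
  have w2 := QP_iso (mulA_specV _ p1 p2 s1 s2).symm w1
  have w3 := QP_pw hpw w2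
  have w4 := QP_iso (mulA_specV _ q1 q2 t1 t2) w3
  obtain ⟨ρ', v', hv', h'⟩ := alg_of_QP w4
  exact hno ρ' v' hv' h'

end
end KL

/-- Over a convenient field, any nonzero `χ` in the kernel of
multiplication by `L` can be written as `χ = [X] - [Y]` where
`[X × 𝔸¹] = [Y × 𝔸¹]` but `X × 𝔸¹` and `Y × 𝔸¹` are not piecewise isomorphic. -/
theorem kernel_of_L_representation (k : Type u) [Field k] (hk : ConvenientField k)
    (χ : K0Var k) (hχ : χ ≠ 0) (hLχ : MulLZero χ) :
    ∃ (X Y A XA YA : Variety k),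
      IsAffLine A ∧ IsProductOf XA X A ∧ IsProductOf YA Y A ∧
      χ = K0Var.cls X - K0Var.cls Y ∧
      K0Var.cls XA = K0Var.cls YA ∧
      ¬ PiecewiseIso XA YA := by
  exact KL.final χ hLχ
end
end

section
/- Let φ: X ⇢ Y be a birational isomorphism between smooth projective varieties of dimension n over a field k, represented by an isomorphism U → V of dense open subvarieties. Let U' ⊆ U be a dense open subvariety and V' = φ(U'), so that φ is also represented by the restricted isomorphism U' → V'. If [X∖U] − [Y∖V] lies in the image of multiplication by L : K_0(V_k^{(n−2)}) → K_0(V_k^{(n−1)}), then so does [X∖U'] − [Y∖V']. In particular, whether φ is convenient does not depend on the chosen representation. -/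
open AlgebraicGeometry CategoryTheory CategoryTheory.Limits

noncomputable section

universe u

open Variety


namespace ConvAux

open Variety

lemma exists_lift {Z T X : Scheme.{u}} (i : Z ⟶ X) [IsClosedImmersion i] (f : T ⟶ X)
    [IsReduced T] (hf : Set.range f.base ⊆ Set.range i.base) : ∃ g : T ⟶ Z, g ≫ i = f := by
  have hs : Surjective (pullback.snd i f) := by
    constructor
    intro t
    obtain ⟨z, hz⟩ := hf ⟨t, rfl⟩
    obtain ⟨w, _, hw⟩ := Scheme.Pullback.exists_preimage_pullback (f := i) (g := f) z t hz
    exact ⟨w, hw⟩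
  have := isIso_of_isClosedImmersion_of_surjective (pullback.snd i f)
  exact ⟨inv (pullback.snd i f) ≫ pullback.fst i f, by
    rw [Category.assoc, pullback.condition, IsIso.inv_hom_id_assoc]⟩

lemma exists_iso {Z T X : Scheme.{u}} (i : Z ⟶ X) [IsClosedImmersion i] (f : T ⟶ X)
    [IsClosedImmersion f] [IsReduced T] [IsReduced Z]
    (hf : Set.range f.base = Set.range i.base) : ∃ g : T ≅ Z, g.hom ≫ i = f := by
  obtain ⟨a, ha⟩ := exists_lift i f hf.le
  obtain ⟨b, hb⟩ := exists_lift f i hf.ge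
  refine ⟨⟨a, b, ?_, ?_⟩, ha⟩
  · rw [← cancel_mono f, Category.assoc, hb, ha, Category.id_comp]
  · rw [← cancel_mono i, Category.assoc, ha, hb, Category.id_comp]

lemma exists_reduced {X : Scheme.{u}} (U : X.Opens) :
    ∃ (Z : Scheme.{u}) (i : Z ⟶ X), IsReduced Z ∧ IsClosedImmersion i ∧
      Set.range i.base = (U : Set X)ᶜ := by
  let I := Scheme.IdealSheafData.vanishingIdeal (X := X) U.compl
  refine ⟨I.subscheme, I.subschemeι, ?_, inferInstance, ?_⟩
  · have : ∀ j, IsReduced (I.subschemeCover.openCover.X j) := by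
      intro (V : X.affineOpens)
      have hr : (I.ideal V).IsRadical := by
        simp only [I, Scheme.IdealSheafData.vanishingIdeal_ideal]
        exact PrimeSpectrum.isRadical_vanishingIdeal _
      have : _root_.IsReduced (Γ(X, V) ⧸ I.ideal V) :=
        (Ideal.isRadical_iff_quotient_reduced _).1 hr
      change IsReduced (Spec (.of (Γ(X, V) ⧸ I.ideal V)))
      infer_instance
    exact IsReduced.of_openCover _ I.subschemeCover.openCover
  · refine (Scheme.IdealSheafData.range_subschemeι I).trans ?_
    simp [I]

variable {k : Type u} [Field k]

lemma exists_complement (X : Variety k) (U : X.toScheme.Opens) :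
    ∃ Z : Variety k, IsComplementOf Z X U := by
  obtain ⟨Z, i, h1, h2, h3⟩ := exists_reduced U
  have := X.separated
  have := X.locallyOfFiniteType
  have := X.quasiCompact
  exact ⟨⟨Z, i ≫ X.str, h1, inferInstance, inferInstance, inferInstance⟩, i, h2, rfl, h3⟩

lemma isNoetherian (X : Variety k) : IsNoetherian X.toScheme := by
  have := X.locallyOfFiniteType
  have := X.quasiCompact
  have : IsLocallyNoetherian X.toScheme := LocallyOfFiniteType.isLocallyNoetherian X.str
  have : CompactSpace X.toScheme := QuasiCompact.compactSpace_of_compactSpace X.str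
  exact {}

/-- Open subvariety. -/
def openSub (X : Variety k) (U : X.toScheme.Opens) : Variety k where
  toScheme := U.toScheme
  str := U.ι ≫ X.str
  reduced := by have := X.reduced; infer_instance
  separated := by have := X.separated; infer_instance
  locallyOfFiniteType := by have := X.locallyOfFiniteType; infer_instance
  quasiCompact := by
    have := X.quasiCompact
    have := isNoetherian X
    infer_instance

lemma cls_iso {P : Variety k → Prop} {X Y : Variety k} (hX : P X) (hY : P Y)
    (e : X.toScheme ≅ Y.toScheme) (he : e.hom ≫ Y.str = X.str) :
    K0.cls X hX = K0.cls Y hY := by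
  refine (QuotientAddGroup.eq_iff_sub_mem).2 (AddSubgroup.subset_closure ?_)
  exact Or.inl ⟨_, _, ⟨e, he⟩, rfl⟩

lemma cls_cut {P : Variety k → Prop} {X Y U : Variety k} (hX : P X) (hY : P Y) (hU : P U)
    (i : Y.toScheme ⟶ X.toScheme) (j : U.toScheme ⟶ X.toScheme)
    (hi : IsClosedImmersion i) (hj : IsOpenImmersion j)
    (h1 : i ≫ X.str = Y.str) (h2 : j ≫ X.str = U.str)
    (h3 : Set.range j.base = (Set.range i.base)ᶜ) :
    K0.cls X hX = K0.cls Y hY + K0.cls U hU := by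
  refine (QuotientAddGroup.eq_iff_sub_mem (N := AddSubgroup.closure (cutRel P))).2
    (AddSubgroup.subset_closure ?_)
  exact Or.inr ⟨⟨X, hX⟩, ⟨Y, hY⟩, ⟨U, hU⟩, i, j, hi, hj, h1, h2, h3, (sub_sub _ _ _).symm⟩

/-- The decomposition of `X ∖ U'` into `X ∖ U` and the open piece lying over `U`. -/
lemma split (d : WithBot ℕ∞) (X Z Z' : Variety k) (U U' : X.toScheme.Opens) (hle : U' ≤ U)
    (i : Z.toScheme ⟶ X.toScheme) (i' : Z'.toScheme ⟶ X.toScheme)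
    (hi : IsClosedImmersion i) (hi' : IsClosedImmersion i')
    (h : i ≫ X.str = Z.str) (h' : i' ≫ X.str = Z'.str)
    (hr : Set.range i.base = (U : Set X.toScheme)ᶜ)
    (hr' : Set.range i'.base = (U' : Set X.toScheme)ᶜ) (hd : Z'.dim ≤ d) :
    ∃ (h1 : Z.dim ≤ d) (h2 : (openSub Z' (i' ⁻¹ᵁ U)).dim ≤ d),
      K0.cls (P := fun V => V.dim ≤ d) Z' hd = K0.cls Z h1 + K0.cls (openSub Z' (i' ⁻¹ᵁ U)) h2 := by
  have := Z.reduced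
  obtain ⟨g, hg⟩ := exists_lift i' i (by
    rw [hr, hr']
    exact Set.compl_subset_compl.2 hle)
  have hgc : IsClosedImmersion g := by
    have : IsClosedImmersion (g ≫ i') := hg ▸ hi
    exact IsClosedImmersion.of_comp_isClosedImmersion g i'
  have h1 : Z.dim ≤ d := le_trans
    (Topology.IsInducing.topologicalKrullDim_le g.isClosedEmbedding.isInducing) hd
  have h2 : (openSub Z' (i' ⁻¹ᵁ U)).dim ≤ d := le_trans
    (Topology.IsInducing.topologicalKrullDim_le
      (i' ⁻¹ᵁ U).ι.isOpenEmbedding.isInducing) hd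
  refine ⟨h1, h2, cls_cut _ _ _ g (i' ⁻¹ᵁ U).ι hgc (inferInstanceAs (IsOpenImmersion (i' ⁻¹ᵁ U).ι)) ?_ rfl ?_⟩
  · rw [← h, ← hg, Category.assoc, h']
  · have hinj : Function.Injective i'.base := i'.isClosedEmbedding.injective
    have hrg : Set.range g.base = i'.base ⁻¹' (U : Set X.toScheme)ᶜ := by
      rw [← hr, ← hg]
      ext z
      constructor
      · rintro ⟨w, rfl⟩
        exact ⟨w, by simp⟩
      · rintro ⟨w, hw⟩
        exact ⟨w, hinj (by simpa using hw)⟩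
    rw [hrg, Set.preimage_compl, compl_compl]
    exact Scheme.Opens.range_ι _

lemma range_restrict {X Z : Scheme.{u}} (U U' : X.Opens) (i : Z ⟶ X)
    (hr : Set.range i.base = (U' : Set X)ᶜ) :
    Set.range (i ∣_ U).base = (U.ι.base ⁻¹' (U' : Set X))ᶜ := by
  rw [← Set.preimage_compl, ← hr]
  ext x
  constructor
  · rintro ⟨z, rfl⟩
    refine ⟨(i ⁻¹ᵁ U).ι z, ?_⟩
    have := morphismRestrict_ι i U
    exact (congrArg (fun f => f.base z) this).symm
  · rintro ⟨z, hz⟩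
    have hzU : z ∈ i ⁻¹ᵁ U := by
      change i.base z ∈ U
      rw [hz]; exact x.2
    refine ⟨⟨z, hzU⟩, ?_⟩
    apply U.ι.isOpenEmbedding.injective
    have := morphismRestrict_ι i U
    refine (congrArg (fun f => f.base ⟨z, hzU⟩) this).trans hz

end ConvAux

/-- Convenience of a birational isomorphism does not depend on the
chosen representation: if `φ : X ⇢ Y` is represented by an isomorphism `e : U ≅ V` of
dense open subvarieties and also by its restriction `U' → V' = φ(U')` to a dense open
`U' ⊆ U`, and `[X ∖ U] - [Y ∖ V]` lies in the image of
`·L : K_0(V_k^{(n-2)}) → K_0(V_k^{(n-1)})`, then so does `[X ∖ U'] - [Y ∖ V']`. -/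
theorem convenientRep_restrict (k : Type u) [Field k] (n : ℕ) (X Y : Variety k)
    (hXs : IsSmoothVar X) (hYs : IsSmoothVar Y)
    (hXp : IsProjectiveVar X) (hYp : IsProjectiveVar Y)
    (hXi : IrreducibleSpace X.toScheme) (hYi : IrreducibleSpace Y.toScheme)
    (hXd : X.dim = (n : WithBot ℕ∞)) (hYd : Y.dim = (n : WithBot ℕ∞))
    (U : X.toScheme.Opens) (V : Y.toScheme.Opens)
    (hU : Dense (U : Set X.toScheme)) (hV : Dense (V : Set Y.toScheme))
    (e : U.toScheme ≅ V.toScheme) (he : e.hom ≫ V.ι ≫ Y.str = U.ι ≫ X.str)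
    (U' : X.toScheme.Opens) (hU'le : U' ≤ U) (hU' : Dense (U' : Set X.toScheme))
    (V' : Y.toScheme.Opens)
    (hV' : (V' : Set Y.toScheme) =
      V.ι.base '' (e.hom.base '' (U.ι.base ⁻¹' (U' : Set X.toScheme))))
    (h : ConvenientRep n X Y U V) :
    ConvenientRep n X Y U' V' := by
  intro ZX' ZY' hZX' hZY' ⟨iX', hiX', hsX', hrX'⟩ ⟨iY', hiY', hsY', hrY'⟩
  obtain ⟨ZX, iX, hiX, hsX, hrX⟩ := ConvAux.exists_complement X U
  obtain ⟨ZY, iY, hiY, hsY, hrY⟩ := ConvAux.exists_complement Y V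
  have hV'le : V' ≤ V := by
    intro y hy
    have hy' : y ∈ (V' : Set Y.toScheme) := hy
    rw [hV'] at hy'
    obtain ⟨w, _, rfl⟩ := hy'
    exact w.2
  obtain ⟨hdX, hdDX, eqX⟩ := ConvAux.split _ X ZX ZX' U U' hU'le iX iX' hiX hiX' hsX hsX' hrX hrX' hZX'
  obtain ⟨hdY, hdDY, eqY⟩ := ConvAux.split _ Y ZY ZY' V V' hV'le iY iY' hiY hiY' hsY hsY' hrY hrY' hZY'
  have key := h ZX ZY hdX hdY ⟨iX, hiX, hsX, hrX⟩ ⟨iY, hiY, hsY, hrY⟩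
  have r1 := ZX'.reduced
  have r2 := ZY'.reduced
  have hrange : Set.range ((iX' ∣_ U) ≫ e.hom).base = Set.range (iY' ∣_ V).base := by
    rw [ConvAux.range_restrict V V' iY' hrY', hV',
      Set.preimage_image_eq _ V.ι.isOpenEmbedding.injective]
    have hb : Function.Bijective e.hom.base := e.hom.homeomorph.bijective
    rw [← Set.image_compl_eq hb, ← ConvAux.range_restrict U U' iX' hrX', ← Set.range_comp]
    simp
  obtain ⟨g, hg⟩ := ConvAux.exists_iso (iY' ∣_ V) ((iX' ∣_ U) ≫ e.hom) hrange
  have hcls : K0.cls (P := fun V => V.dim ≤ ((n - 1 : ℕ) : WithBot ℕ∞)) _ hdDX = K0.cls _ hdDY := by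
    refine ConvAux.cls_iso _ _ g ?_
    change g.hom ≫ (iY' ⁻¹ᵁ V).ι ≫ ZY'.str = (iX' ⁻¹ᵁ U).ι ≫ ZX'.str
    rw [← hsY', ← hsX', ← morphismRestrict_ι_assoc, ← morphismRestrict_ι_assoc, reassoc_of% hg, he]
  rw [eqX, eqY, hcls, add_sub_add_right_eq_sub]
  exact key
end
end
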